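/- arXiv:2508.07097 — 2 statements merged into one kernel-verified Lean document; each statement's English description precedes it below -/
import Mathlib

section
/- Let φ: (R,m,k) → (S,n,ℓ) be a surjective local ring homomorphism between commutative Noetherian local rings whose kernel is generated by an R-regular sequence, and let M be a finitely generated S-module. If CI*-fd_R M < ∞, then CI*-dim_S M < ∞. -/
/-!
Common definitions: André–Quillen homology via the standard (comonad/polynomial)
simplicial resolution, complete-intersection (flat) dimensions via quasi-deformations,
Cohen factorizations, Koszul homology `H₁`, and related notions.
-/

universe u

open TensorProduct IsLocalRing

noncomputable section

/-! ### Flat and projective dimension -/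

/-- `FlatDimLE Q n N` : the `Q`-module `N` has flat dimension at most `n`,
i.e. it admits a flat resolution of length at most `n`. -/
def FlatDimLE (Q : Type u) [CommRing Q] : ℕ → (N : Type u) → [AddCommGroup N] → [Module Q N] → Prop
  | 0, N, _, _ => Module.Flat Q N
  | n+1, N, _, _ =>
      ∃ (F : Type u) (_ : AddCommGroup F) (_ : Module Q F) (f : F →ₗ[Q] N),
        Module.Flat Q F ∧ Function.Surjective f ∧ FlatDimLE Q n (LinearMap.ker f)

/-- `ProjDimLE Q n N` : the `Q`-module `N` has projective dimension at most `n`. -/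
def ProjDimLE (Q : Type u) [CommRing Q] : ℕ → (N : Type u) → [AddCommGroup N] → [Module Q N] → Prop
  | 0, N, _, _ => Module.Projective Q N
  | n+1, N, _, _ =>
      ∃ (F : Type u) (_ : AddCommGroup F) (_ : Module Q F) (f : F →ₗ[Q] N),
        Module.Projective Q F ∧ Function.Surjective f ∧ ProjDimLE Q n (LinearMap.ker f)

/-- The flat dimension `fd_Q N` is finite. -/
def FlatDimFinite (Q : Type u) [CommRing Q] (N : Type u) [AddCommGroup N] [Module Q N] : Prop :=
  ∃ n : ℕ, FlatDimLE Q n N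

/-- The projective dimension `pd_Q N` is finite. -/
def ProjDimFinite (Q : Type u) [CommRing Q] (N : Type u) [AddCommGroup N] [Module Q N] : Prop :=
  ∃ n : ℕ, ProjDimLE Q n N

/-! ### Regular sequences, regular local rings, complete intersection conditions -/

/-- The ideal `I` is generated by an `A`-regular sequence. -/
def GeneratedByRegularSequence (A : Type u) [CommRing A] (I : Ideal A) : Prop :=
  ∃ rs : List A, RingTheory.Sequence.IsRegular A rs ∧ Ideal.span {x | x ∈ rs} = I

/-- A (Noetherian local) ring is regular iff its maximal ideal is generated by a
regular sequence. -/
def IsRegularLocal (A : Type u) [CommRing A] : Prop :=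
  IsNoetherianRing A ∧
    ∃ h : IsLocalRing A, GeneratedByRegularSequence A (@IsLocalRing.maximalIdeal A _ h)

/-- A local homomorphism is weakly regular if it is flat with regular closed fibre. -/
def IsWeaklyRegularHom (A B : Type u) [CommRing A] [CommRing B] [IsLocalRing A]
    (f : A →+* B) : Prop :=
  IsLocalHom f ∧ (letI := f.toAlgebra; Module.Flat A B) ∧
    IsRegularLocal (B ⧸ Ideal.map f (maximalIdeal A))

/-- `R'' → f → g` is a Cohen factorization of the semi-completion of `ψ : A → B`
with respect to the (maximal) ideal `J` of `B`:  `A → R'' → B̂` with `A → R''`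
weakly regular, `R''` complete Noetherian local and `R'' → B̂` surjective local. -/
def IsCohenFactorizationAt (A B : Type u) [CommRing A] [CommRing B] [IsLocalRing A]
    (ψ : A →+* B) (J : Ideal B) (R'' : Type u) [CommRing R'']
    (f : A →+* R'') (g : R'' →+* AdicCompletion J B) : Prop :=
  g.comp f = (algebraMap B (AdicCompletion J B)).comp ψ ∧
  IsNoetherianRing R'' ∧
  (∃ h : IsLocalRing R'', IsAdicComplete (@IsLocalRing.maximalIdeal R'' _ h) R'') ∧
  IsWeaklyRegularHom A R'' f ∧
  Function.Surjective g ∧ IsLocalHom g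

/-- `ψ : A → B` is complete intersection (c.i.) at the ideal `J` (typically the
maximal ideal of `B`): in a Cohen factorization `A → R'' → B̂` of the
semi-completion of `ψ`, the kernel of `R'' → B̂` is generated by a regular sequence. -/
def IsCIAt (A B : Type u) [CommRing A] [CommRing B] [IsLocalRing A]
    (ψ : A →+* B) (J : Ideal B) : Prop :=
  ∃ (R'' : Type u) (_ : CommRing R'') (f : A →+* R'') (g : R'' →+* AdicCompletion J B),
    IsCohenFactorizationAt A B ψ J R'' f g ∧ GeneratedByRegularSequence R'' (RingHom.ker g)

/-- A Noetherian local ring is a complete intersection if its completion is the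
quotient of a complete regular local ring by an ideal generated by a regular sequence. -/
def IsCompleteIntersectionRing (A : Type u) [CommRing A] : Prop :=
  IsNoetherianRing A ∧
  ∃ h : IsLocalRing A,
    ∃ (Q : Type u) (_ : CommRing Q)
      (g : Q →+* AdicCompletion (@IsLocalRing.maximalIdeal A _ h) A),
      IsRegularLocal Q ∧ (∃ hq : IsLocalRing Q, IsAdicComplete (@IsLocalRing.maximalIdeal Q _ hq) Q) ∧
      Function.Surjective g ∧ GeneratedByRegularSequence Q (RingHom.ker g)

/-! ### Complete intersection (flat) dimensions via quasi-deformations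

`R → R' ← Q` is a quasi-deformation when `R → R'` is flat local and `Q → R'` is
surjective local with kernel generated by a `Q`-regular sequence (all rings
Noetherian local).  The various complete intersection (flat) dimensions
`CI-fd`, `CI-dim`, `CI*-fd`, `CI*-dim`, `cidim-fd`, `cidim` of a module `M` are
`inf { fd_Q(R' ⊗_R M) - pd_Q R' }` over (upper / complete intersection)
quasi-deformations; such a dimension is finite iff there is a quasi-deformation
of the appropriate kind for which both `fd_Q (R' ⊗_R M)` and `pd_Q R'` are finite. -/

/-- The conditions on `R → R' ← Q` making it a quasi-deformation. -/
def IsQuasiDeformation (R R' Q : Type u) [CommRing R] [CommRing R'] [CommRing Q]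
    (f : R →+* R') (g : Q →+* R') : Prop :=
  IsLocalRing R' ∧ IsLocalRing Q ∧ IsNoetherianRing R' ∧ IsNoetherianRing Q ∧
  IsLocalHom f ∧ IsLocalHom g ∧ (letI := f.toAlgebra; Module.Flat R R') ∧
  Function.Surjective g ∧ GeneratedByRegularSequence Q (RingHom.ker g)

/-- `CI-fd_R M < ∞` (equivalently, for finitely generated `M`, `CI-dim_R M < ∞`):
there is a quasi-deformation `R → R' ← Q` with `fd_Q (R' ⊗_R M)` and `pd_Q R'` finite. -/
def HasFiniteCIDim (R : Type u) [CommRing R] (M : Type u) [AddCommGroup M] [Module R M] : Prop :=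
  ∃ (R' Q : Type u) (_ : CommRing R') (_ : CommRing Q) (f : R →+* R') (g : Q →+* R'),
    IsQuasiDeformation R R' Q f g ∧
    (letI := f.toAlgebra;
     letI := g.toAlgebra;
     letI : Module Q (R' ⊗[R] M) := Module.compHom _ g;
     FlatDimFinite Q (R' ⊗[R] M) ∧ ProjDimFinite Q R')

/-- `CI*-fd_R M < ∞` (resp. `CI*-dim_R M < ∞`): as in `HasFiniteCIDim` but over
upper quasi-deformations, i.e. `R → R'` is weakly regular. -/
def HasFiniteUpperCIDim (R : Type u) [CommRing R] [IsLocalRing R]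
    (M : Type u) [AddCommGroup M] [Module R M] : Prop :=
  ∃ (R' Q : Type u) (_ : CommRing R') (_ : CommRing Q) (f : R →+* R') (g : Q →+* R'),
    IsQuasiDeformation R R' Q f g ∧ IsWeaklyRegularHom R R' f ∧
    (letI := f.toAlgebra;
     letI := g.toAlgebra;
     letI : Module Q (R' ⊗[R] M) := Module.compHom _ g;
     FlatDimFinite Q (R' ⊗[R] M) ∧ ProjDimFinite Q R')

/-- `cidim-fd_R M < ∞` (resp. `cidim_R M < ∞`): as in `HasFiniteCIDim` but over
complete intersection quasi-deformations, i.e. `R → R'` is c.i. at the maximal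
ideal of `R'`. -/
def HasFiniteCIQDDim (R : Type u) [CommRing R] [IsLocalRing R]
    (M : Type u) [AddCommGroup M] [Module R M] : Prop :=
  ∃ (R' Q : Type u) (_ : CommRing R') (_ : CommRing Q) (hR' : IsLocalRing R')
    (f : R →+* R') (g : Q →+* R'),
    IsQuasiDeformation R R' Q f g ∧
    IsCIAt R R' f (@IsLocalRing.maximalIdeal R' _ hR') ∧
    (letI := f.toAlgebra;
     letI := g.toAlgebra;
     letI : Module Q (R' ⊗[R] M) := Module.compHom _ g;
     FlatDimFinite Q (R' ⊗[R] M) ∧ ProjDimFinite Q R')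

/-! ### André–Quillen homology

`D_n(S|R, M)` is defined as the `n`-th homology of `L ⊗_S M`, where `L` is the
cotangent complex of the `R`-algebra `S`: the complex associated to the standard
simplicial resolution `X` of `S` by polynomial `R`-algebras (the comonad
resolution `X_n = G^{n+1} S`, `G A = R[A]`), with `L_n = S ⊗_{X_n} Ω_{X_n/R}`
the free `S`-module on the variables of `X_n` and differentials the alternating
sums of the maps induced by the face maps. -/

/-- `AQV R S n` is, for `n ≥ 1`, the `n`-th ring in the standard simplicial
polynomial resolution of `S` over `R` (and `AQV R S 0 = S` as an index set). -/
def AQV (R S : Type u) [CommRing R] : ℕ → Type u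
  | 0 => S
  | n+1 => MvPolynomial (AQV R S n) R

noncomputable instance (R S : Type u) [CommRing R] (n : ℕ) : CommRing (AQV R S (n+1)) :=
  inferInstanceAs (CommRing (MvPolynomial (AQV R S n) R))

noncomputable instance (R S : Type u) [CommRing R] (n : ℕ) : Algebra R (AQV R S (n+1)) :=
  inferInstanceAs (Algebra R (MvPolynomial (AQV R S n) R))

/-- The augmentations `X_n → S` of the standard resolution. -/
def AQaug (R S : Type u) [CommRing R] [CommRing S] [Algebra R S] :
    (n : ℕ) → (AQV R S (n+1) →ₐ[R] S)
  | 0 => MvPolynomial.aeval (id : S → S)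
  | n+1 => MvPolynomial.aeval (fun v : AQV R S (n+1) => AQaug R S n v)

/-- The face maps `dᵢ : X_{n+1} → X_n` of the standard resolution: `d₀` is the
counit and `d_{i+1} = G(dᵢ)`. -/
def AQface (R S : Type u) [CommRing R] [CommRing S] [Algebra R S] :
    (n : ℕ) → (i : ℕ) → (AQV R S (n+2) →ₐ[R] AQV R S (n+1))
  | n, 0 => MvPolynomial.aeval (id : AQV R S (n+1) → AQV R S (n+1))
  | 0, _+1 => MvPolynomial.rename ⇑(AQaug R S 0)
  | n+1, i+1 => MvPolynomial.rename ⇑(AQface R S n i)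

variable (R S : Type u) [CommRing R] [CommRing S] [Algebra R S]
variable (M : Type u) [AddCommGroup M] [Module S M]

/-- The map `L_{n+1} ⊗ M → L_n ⊗ M` induced by an `R`-algebra map
`f : X_{n+1} → X_n` on the (base-changed) Kähler differentials: the free module
on the variables `v` of `X_{n+1}` maps by `e_v ↦ ∑_w aug(∂(f Xᵥ)/∂w) • e_w`. -/
def AQind (n : ℕ) (f : AQV R S (n+2) →ₐ[R] AQV R S (n+1)) :
    (AQV R S (n+1) →₀ M) →ₗ[S] (AQV R S n →₀ M) :=
  Finsupp.lsum S fun v : AQV R S (n+1) =>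
    letI : DecidableEq (AQV R S n) := Classical.decEq _
    let P : MvPolynomial (AQV R S n) R := f (MvPolynomial.X v)
    ∑ w ∈ P.vars,
      (Finsupp.lsingle w).comp
        ((AQaug R S n ((MvPolynomial.pderiv w) P) : S) • (LinearMap.id : M →ₗ[S] M))

/-- The differential `L_{n+1} ⊗ M → L_n ⊗ M` of the cotangent complex:
the alternating sum of the maps induced by the face maps. -/
def AQdiff (n : ℕ) : (AQV R S (n+1) →₀ M) →ₗ[S] (AQV R S n →₀ M) :=
  ∑ i ∈ Finset.range (n+2), ((-1 : ℤ)^i) • AQind R S M n (AQface R S n i)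

/-- Cycles of the cotangent complex with coefficients in `M`. -/
def AQcycles : (n : ℕ) → Submodule S (AQV R S n →₀ M)
  | 0 => ⊤
  | n+1 => LinearMap.ker (AQdiff R S M n)

/-- André–Quillen homology `D_n(S|R, M)`. -/
def AQH (n : ℕ) : Type u :=
  AQcycles R S M n ⧸
    (LinearMap.range (AQdiff R S M n)).comap (AQcycles R S M n).subtype

noncomputable instance (n : ℕ) : AddCommGroup (AQH R S M n) :=
  inferInstanceAs (AddCommGroup (AQcycles R S M n ⧸
    (LinearMap.range (AQdiff R S M n)).comap (AQcycles R S M n).subtype))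

/-- `AQdimLE R S d`: the André–Quillen dimension of the `R`-algebra `S` is at
most `d`, i.e. `D_n(S|R, -) = 0` for all `n > d`. -/
def AQdimLE (d : ℕ) : Prop :=
  ∀ n : ℕ, d < n → ∀ (N : Type u) (iN : AddCommGroup N) (mN : Module S N),
    Subsingleton (@AQH R S _ _ _ N iN mN n)

/-- `AQ-dim_R S < ∞`. -/
def AQdimFinite : Prop := ∃ d : ℕ, AQdimLE R S d

/-! ### Koszul homology `H₁` -/

/-- First differential of the Koszul complex on `x : Fin c → A`. -/
def koszulD1 (A : Type u) [CommRing A] {c : ℕ} (x : Fin c → A) : (Fin c → A) →ₗ[A] A :=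
  ∑ i, x i • (LinearMap.proj i : ((Fin c → A)) →ₗ[A] A)

/-- One-cycles of the Koszul complex on `x`. -/
def koszulZ1 (A : Type u) [CommRing A] {c : ℕ} (x : Fin c → A) : Submodule A (Fin c → A) :=
  LinearMap.ker (koszulD1 A x)

/-- One-boundaries of the Koszul complex on `x` (the image of the second Koszul
differential, spanned by the elements `xᵢ eⱼ - xⱼ eᵢ`). -/
def koszulB1 (A : Type u) [CommRing A] {c : ℕ} (x : Fin c → A) : Submodule A (Fin c → A) :=
  Submodule.span A
    {v : Fin c → A | ∃ i j, v =
      x i • (Pi.single j (1 : A) : Fin c → A) - x j • (Pi.single i (1 : A) : Fin c → A)}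

/-- First Koszul homology of the sequence `x : Fin c → A`. -/
def KoszulH1 (A : Type u) [CommRing A] {c : ℕ} (x : Fin c → A) : Type u :=
  koszulZ1 A x ⧸ (koszulB1 A x).comap (koszulZ1 A x).subtype

noncomputable instance (A : Type u) [CommRing A] {c : ℕ} (x : Fin c → A) :
    AddCommGroup (KoszulH1 A x) :=
  inferInstanceAs (AddCommGroup (koszulZ1 A x ⧸ (koszulB1 A x).comap (koszulZ1 A x).subtype))

noncomputable instance (A : Type u) [CommRing A] {c : ℕ} (x : Fin c → A) :
    Module A (KoszulH1 A x) :=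
  inferInstanceAs (Module A (koszulZ1 A x ⧸ (koszulB1 A x).comap (koszulZ1 A x).subtype))

/-- `H₁(K(σ))` is a free `T̂`-module:  for any Cohen factorization
`S → S'' → T̂` of the semi-completion of `σ` and any finite generating set `x` of
`ker (S'' → T̂)`, the first Koszul homology of `x`, base-changed to `T̂`
(it is killed by `ker (S'' → T̂)`), is a free `T̂`-module. -/
def KoszulH1FreeHom (S T : Type u) [CommRing S] [CommRing T] [IsLocalRing S] [IsLocalRing T]
    (σ : S →+* T) : Prop :=
  ∀ (S'' : Type u) (_ : CommRing S'') (f : S →+* S'')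
    (g : S'' →+* AdicCompletion (maximalIdeal T) T),
    IsCohenFactorizationAt S T σ (maximalIdeal T) S'' f g →
    ∀ (c : ℕ) (x : Fin c → S''), Ideal.span (Set.range x) = RingHom.ker g →
      (letI := g.toAlgebra;
       Module.Free (AdicCompletion (maximalIdeal T) T)
         ((AdicCompletion (maximalIdeal T) T) ⊗[S''] (KoszulH1 S'' x)))

/-! ### Separability (MacLane) -/

/-- A field extension `ℓ/k` is separable (in the sense of MacLane, allowing
non-algebraic extensions) iff `K ⊗_k ℓ` is reduced for every field extension `K/k`. -/
def IsSeparableFieldExtension (k ℓ : Type u) [Field k] [Field ℓ] [Algebra k ℓ] : Prop :=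
  ∀ (K : Type u) (_ : Field K) (_ : Algebra k K), IsReduced (K ⊗[k] ℓ)

end


variable (R S M : Type u) [CommRing R] [CommRing S]
  [IsLocalRing R] [IsLocalRing S] [IsNoetherianRing R] [IsNoetherianRing S]
  [Algebra R S] [IsLocalHom (algebraMap R S)]
  [AddCommGroup M] [Module R M] [Module S M] [IsScalarTower R S M] [Module.Finite S M]

/-!
Base change the quasi-deformation `A → A' ← Q` along the surjection `A → B`: put `B' = B ⊗[A] A'`.
A regular sequence generating the kernel of `A → B` stays regular in the flat algebra `A'`, where
it generates the kernel of `A' → B'`; prepending a regular sequence generating the kernel of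
`Q → A'` shows that `Q → B'` is again a quotient by a regular sequence. The closed fibre of
`B → B'` is that of `A → A'`, and `B' ⊗[B] N ≃ A' ⊗[A] N`, so the flat dimension over `Q` is
unchanged, while `pd_Q B'` is at most the length of the concatenated sequence.
-/

section Dimension

variable {Q : Type u} [CommRing Q]

theorem FlatDimLE.of_linearEquiv {n : ℕ} {N N' : Type u} [AddCommGroup N] [Module Q N]
    [AddCommGroup N'] [Module Q N'] (e : N ≃ₗ[Q] N') (h : FlatDimLE Q n N) : FlatDimLE Q n N' := by
  cases n with
  | zero =>
    have : Module.Flat Q N := h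
    exact (Module.Flat.of_linearEquiv e.symm : Module.Flat Q N')
  | succ n =>
    obtain ⟨F, _, _, f, hF, hf, hker⟩ := h
    refine ⟨F, _, _, e.toLinearMap ∘ₗ f, hF, e.surjective.comp hf, ?_⟩
    rwa [LinearEquiv.ker_comp]

theorem FlatDimFinite.of_linearEquiv {N N' : Type u} [AddCommGroup N] [Module Q N]
    [AddCommGroup N'] [Module Q N'] (e : N ≃ₗ[Q] N') (h : FlatDimFinite Q N) :
    FlatDimFinite Q N' :=
  h.imp fun _ ↦ FlatDimLE.of_linearEquiv e

open CategoryTheory in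
theorem projDimLE_of_hasProjectiveDimensionLE {n : ℕ} {N : Type u} [AddCommGroup N] [Module Q N]
    (h : HasProjectiveDimensionLE (ModuleCat.of Q N) n) : ProjDimLE Q n N := by
  induction n generalizing N with
  | zero =>
    rw [← projective_iff_hasProjectiveDimensionLE_zero] at h
    exact (IsProjective.iff_projective (R := Q) N).mpr h
  | succ n ih =>
    have hsurj := Finsupp.linearCombination_id_surjective Q N
    have hfree : Projective (ModuleCat.of Q (N →₀ Q)) :=
      (IsProjective.iff_projective (R := Q) (N →₀ Q)).mp inferInstance
    have hexact := LinearMap.shortExact_shortComplexKer hsurj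
    exact ⟨N →₀ Q, _, _, Finsupp.linearCombination Q id, inferInstance, hsurj,
      ih ((hexact.hasProjectiveDimensionLT_X₃_iff n hfree).mp h)⟩

end Dimension

namespace GeneratedByRegularSequence

variable {A B C : Type u} [CommRing A] [CommRing B] [CommRing C]

theorem map_of_flat {I : Ideal A} (h : GeneratedByRegularSequence A I) {f : A →+* B}
    (hf : f.Flat) (hI : I.map f ≠ ⊤) : GeneratedByRegularSequence B (I.map f) := by
  obtain ⟨rs, hrs, rfl⟩ := h
  let := f.toAlgebra
  have : Module.Flat A B := hf
  have hspan : Ideal.ofList (rs.map f) = (Ideal.ofList rs).map f := (Ideal.map_ofList f rs).symm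
  refine ⟨rs.map f, ⟨hrs.1.of_flat, ?_⟩, hspan⟩
  rw [smul_eq_mul, Ideal.mul_top, hspan]
  exact hI.symm

theorem nontrivial_of_ker {f : A →+* B} (h : GeneratedByRegularSequence A (RingHom.ker f)) :
    Nontrivial B := by
  obtain ⟨rs, hrs, hspan⟩ := h
  have hker : RingHom.ker f ≠ ⊤ := by
    simpa [← hspan, Ideal.ofList, eq_comm] using hrs.2
  exact not_subsingleton_iff_nontrivial.mp fun _ ↦ hker (RingHom.ker_eq_top_of_subsingleton f)

theorem ker_comp {f : A →+* B} {g : B →+* C} (hf : Function.Surjective f)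
    (hkerf : GeneratedByRegularSequence A (RingHom.ker f))
    (hkerg : GeneratedByRegularSequence B (RingHom.ker g)) :
    GeneratedByRegularSequence A (RingHom.ker (g.comp f)) := by
  obtain ⟨xs, hxs, hxs_span⟩ := hkerf
  obtain ⟨ys', hys, hys_span⟩ := hkerg
  obtain ⟨ys, rfl⟩ := List.map_surjective_iff.mpr hf ys'
  change Ideal.ofList xs = _ at hxs_span
  change Ideal.ofList (ys.map f) = _ at hys_span
  have hspan : Ideal.ofList (xs ++ ys) = RingHom.ker (g.comp f) := by
    rw [Ideal.ofList_append, hxs_span, ← RingHom.comap_ker, ← hys_span, ← Ideal.map_ofList,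
      Ideal.comap_map_of_surjective' f hf, sup_comm]
  refine ⟨xs ++ ys, ⟨?_, ?_⟩, hspan⟩
  · let := f.toAlgebra
    let e : (A ⧸ (Ideal.ofList xs • ⊤ : Submodule A A)) ≃ₗ[A] B :=
      (Submodule.quotEquivOfEq _ _ (by rw [smul_eq_mul, Ideal.mul_top, hxs_span]; rfl)).trans
        ((Algebra.linearMap A B).quotKerEquivOfSurjective hf)
    rw [RingTheory.Sequence.isWeaklyRegular_append_iff, e.isWeaklyRegular_congr]
    exact ⟨hxs.1, (RingTheory.Sequence.isWeaklyRegular_map_algebraMap_iff B B ys).mp hys.1⟩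
  · have : Nontrivial C := nontrivial_of_ker ⟨_, hys, hys_span⟩
    rw [smul_eq_mul, Ideal.mul_top, hspan]
    exact (RingHom.ker_ne_top _).symm

open CategoryTheory in
theorem projDimFinite [IsLocalRing A] [IsNoetherianRing A] [Algebra A B]
    (hsurj : Function.Surjective (algebraMap A B))
    (h : GeneratedByRegularSequence A (RingHom.ker (algebraMap A B))) : ProjDimFinite A B := by
  obtain ⟨rs, hrs, hspan⟩ := h
  let e : Shrink.{u} (A ⧸ Ideal.ofList rs) ≃ₗ[A] B :=
    (Shrink.linearEquiv A _).trans <| (Submodule.quotEquivOfEq _ _ hspan).trans <|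
      (Algebra.linearMap A B).quotKerEquivOfSurjective hsurj
  have hpd : HasProjectiveDimensionLE
      (ModuleCat.of A (Shrink.{u} (A ⧸ Ideal.ofList rs))) rs.length := by
    rw [← projectiveDimension_le_iff, ModuleCat.projectiveDimension_quotient_eq_length rs hrs]
  exact ⟨rs.length, projDimLE_of_hasProjectiveDimensionLE
    (hasProjectiveDimensionLT_of_iso e.toModuleIso _)⟩

end GeneratedByRegularSequence

theorem IsRegularLocal.of_ringEquiv {A B : Type u} [CommRing A] [CommRing B] (e : A ≃+* B)
    (h : IsRegularLocal A) : IsRegularLocal B := by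
  obtain ⟨_, _, hmax⟩ := h
  have : IsLocalRing B := e.isLocalRing
  have hmap : (maximalIdeal A).map (e : A →+* B) = maximalIdeal B := map_ringEquiv_maximalIdeal e
  refine ⟨isNoetherianRing_of_ringEquiv A e, inferInstance, ?_⟩
  rw [← hmap]
  exact hmax.map_of_flat (.of_bijective e.bijective) (hmap ▸ Ideal.IsPrime.ne_top')

section SurjectiveBaseChange

variable {A A' B B' : Type u} [CommRing A] [CommRing A'] [CommRing B] [CommRing B']
  [Algebra A A'] [Algebra A B] [Algebra A B'] [Algebra A' B'] [Algebra B B']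
  [IsScalarTower A A' B'] [IsScalarTower A B B'] [Algebra.IsPushout A A' B B']
  {J : Ideal A}

/-- The pushout `B' = B ⊗[A] A'` of a surjection `A → B` is the quotient of `A'` by the extension
of the kernel. -/
noncomputable def quotientMapKerEquivOfIsPushout (hsurj : Function.Surjective (algebraMap A B)) :
    (A' ⧸ (RingHom.ker (algebraMap A B)).map (algebraMap A A')) ≃ₐ[A'] B' :=
  (Algebra.TensorProduct.quotIdealMapEquivTensorQuot A' _).trans <|
    (Algebra.TensorProduct.congr AlgEquiv.refl
      (Ideal.quotientKerAlgEquivOfSurjective (f := Algebra.ofId A B) hsurj)).trans <|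
    Algebra.IsPushout.equiv A A' B B'

theorem algebraMap_eq_quotientMapKerEquivOfIsPushout
    (hsurj : Function.Surjective (algebraMap A B)) (x : A') :
    algebraMap A' B' x = quotientMapKerEquivOfIsPushout hsurj (Ideal.Quotient.mk _ x) :=
  ((quotientMapKerEquivOfIsPushout hsurj).commutes x).symm

theorem algebraMap_surjective_of_isPushout (hsurj : Function.Surjective (algebraMap A B)) :
    Function.Surjective (algebraMap A' B') := by
  rw [funext (algebraMap_eq_quotientMapKerEquivOfIsPushout (A' := A') (B' := B') hsurj)]
  exact (AlgEquiv.surjective _).comp Ideal.Quotient.mk_surjective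

theorem ker_algebraMap_of_isPushout (hsurj : Function.Surjective (algebraMap A B)) :
    RingHom.ker (algebraMap A' B') = (RingHom.ker (algebraMap A B)).map (algebraMap A A') := by
  ext x
  rw [RingHom.mem_ker, algebraMap_eq_quotientMapKerEquivOfIsPushout hsurj,
    EmbeddingLike.map_eq_zero_iff, Ideal.Quotient.eq_zero_iff_mem]

theorem comap_map_map_of_isPushout (hsurj : Function.Surjective (algebraMap A B))
    (hJ : RingHom.ker (algebraMap A B) ≤ J) :
    ((J.map (algebraMap A B)).map (algebraMap B B')).comap (algebraMap A' B') =
      J.map (algebraMap A A') := by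
  have hcomm : (J.map (algebraMap A B)).map (algebraMap B B') =
      (J.map (algebraMap A A')).map (algebraMap A' B') := by
    rw [Ideal.map_map, Ideal.map_map, ← IsScalarTower.algebraMap_eq,
      ← IsScalarTower.algebraMap_eq]
  rw [hcomm, Ideal.comap_map_of_surjective' _ (algebraMap_surjective_of_isPushout hsurj),
    ker_algebraMap_of_isPushout hsurj, sup_eq_left]
  exact Ideal.map_mono hJ

/-- The isomorphism `A' ⧸ J A' ≃ B' ⧸ J B'` for an ideal `J` containing the kernel of the
surjection `A → B`. -/
noncomputable def quotientMapEquivOfIsPushout (hsurj : Function.Surjective (algebraMap A B))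
    (hJ : RingHom.ker (algebraMap A B) ≤ J) :
    (A' ⧸ J.map (algebraMap A A')) ≃+*
      B' ⧸ (J.map (algebraMap A B)).map (algebraMap B B') :=
  (Ideal.quotEquivOfEq (by
    rw [← RingHom.comap_ker, Ideal.mk_ker, comap_map_map_of_isPushout hsurj hJ])).trans
    (RingHom.quotientKerEquivOfSurjective
      (f := (Ideal.Quotient.mk _).comp (algebraMap A' B'))
      (Ideal.Quotient.mk_surjective.comp (algebraMap_surjective_of_isPushout hsurj)))

variable (A A' B B') in
theorem faithfullyFlat_of_isPushout [Module.FaithfullyFlat A A'] :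
    Module.FaithfullyFlat B B' := by
  rw [← RingHom.faithfullyFlat_algebraMap_iff]
  exact RingHom.FaithfullyFlat.isStableUnderBaseChange A A' B B'
    (RingHom.faithfullyFlat_algebraMap_iff.mpr ‹_›)

theorem IsWeaklyRegularHom.of_isPushout [IsLocalRing A] [IsLocalRing A'] [IsLocalRing B]
    (h : IsWeaklyRegularHom A A' (algebraMap A A'))
    (hsurj : Function.Surjective (algebraMap A B)) :
    IsWeaklyRegularHom B B' (algebraMap B B') := by
  obtain ⟨_, hflat, hfibre⟩ := h
  have : Module.Flat A A' := RingHom.flat_algebraMap_iff.mp hflat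
  have : Module.FaithfullyFlat A A' := .of_flat_of_isLocalHom
  have := faithfullyFlat_of_isPushout A A' B B'
  refine ⟨inferInstance, RingHom.flat_algebraMap_iff.mpr inferInstance, ?_⟩
  have hker : RingHom.ker (algebraMap A B) ≤ maximalIdeal A :=
    IsLocalRing.le_maximalIdeal (RingHom.ker_ne_top _)
  rw [← IsLocalRing.map_maximalIdeal_of_surjective _ hsurj]
  exact hfibre.of_ringEquiv (quotientMapEquivOfIsPushout hsurj hker)

theorem IsQuasiDeformation.of_isPushout [IsLocalRing A] {Q : Type u} [CommRing Q]
    {g : Q →+* A'} (h : IsQuasiDeformation A A' Q (algebraMap A A') g)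
    (hsurj : Function.Surjective (algebraMap A B))
    (hker : GeneratedByRegularSequence A (RingHom.ker (algebraMap A B))) :
    IsQuasiDeformation B B' Q (algebraMap B B') ((algebraMap A' B').comp g) := by
  obtain ⟨_, hQ, _, hQN, _, _, hflat, hg, hkerg⟩ := h
  have : Module.Flat A A' := RingHom.flat_algebraMap_iff.mp hflat
  have : Module.FaithfullyFlat A A' := .of_flat_of_isLocalHom
  have := faithfullyFlat_of_isPushout A A' B B'
  have : Nontrivial B := hker.nontrivial_of_ker
  have : Nontrivial B' := (FaithfulSMul.algebraMap_injective B B').nontrivial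
  have hsurj' := algebraMap_surjective_of_isPushout (A' := A') (B' := B') hsurj
  have hker' : GeneratedByRegularSequence A' (RingHom.ker (algebraMap A' B')) := by
    have hker_eq := ker_algebraMap_of_isPushout (A' := A') (B' := B') hsurj
    rw [hker_eq]
    exact hker.map_of_flat hflat (hker_eq ▸ RingHom.ker_ne_top _)
  have : IsLocalHom (algebraMap A' B') := .of_surjective _ hsurj'
  exact ⟨.of_surjective' _ hsurj', hQ, isNoetherianRing_of_surjective _ _ _ hsurj', hQN,
    inferInstance, RingHom.isLocalHom_comp _ _, RingHom.flat_algebraMap_iff.mpr inferInstance,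
    hsurj'.comp hg, hkerg.ker_comp hg hker'⟩

theorem FlatDimFinite.of_isPushout {Q N : Type u} [CommRing Q] [Algebra Q A'] [Algebra Q B']
    [IsScalarTower Q A' B'] [AddCommGroup N] [Module A N] [Module B N] [IsScalarTower A B N]
    (h : FlatDimFinite Q (A' ⊗[A] N)) : FlatDimFinite Q (B' ⊗[B] N) := by
  have : IsScalarTower Q A' (B' ⊗[B] N) := .to₁₂₄ Q A' B' _
  exact h.of_linearEquiv ((Algebra.IsPushout.cancelBaseChange A A' B B' N).symm.restrictScalars Q)

end SurjectiveBaseChange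

theorem hasFiniteUpperCIDim_iff {A N : Type u} [CommRing A] [IsLocalRing A] [AddCommGroup N]
    [Module A N] :
    HasFiniteUpperCIDim A N ↔
      ∃ (A' Q : Type u) (_ : CommRing A') (_ : CommRing Q) (_ : Algebra A A') (_ : Algebra Q A'),
        IsQuasiDeformation A A' Q (algebraMap A A') (algebraMap Q A') ∧
        IsWeaklyRegularHom A A' (algebraMap A A') ∧
        FlatDimFinite Q (A' ⊗[A] N) ∧ ProjDimFinite Q A' := by
  have hmod {A' Q : Type u} [CommRing A'] [CommRing Q] (f : A →+* A') (g : Q →+* A') :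
      let := f.toAlgebra
      let := g.toAlgebra
      (.compHom _ g : Module Q (A' ⊗[A] N)) = TensorProduct.leftModule := by
    intro _ _
    exact Module.ext' _ _ fun q x ↦ algebraMap_smul A' q x
  constructor
  · rintro ⟨A', Q, _, _, f, g, hqd, hwr, hfd, hpd⟩
    exact ⟨A', Q, _, _, f.toAlgebra, g.toAlgebra, hqd, hwr, hmod f g ▸ hfd, hpd⟩
  · rintro ⟨A', Q, _, _, instA, instQ, hqd, hwr, hfd, hpd⟩
    obtain ⟨f, rfl⟩ : ∃ f : A →+* A', instA = f.toAlgebra := ⟨_, toAlgebra_algebraMap.symm⟩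
    obtain ⟨g, rfl⟩ : ∃ g : Q →+* A', instQ = g.toAlgebra := ⟨_, toAlgebra_algebraMap.symm⟩
    exact ⟨A', Q, _, _, f, g, hqd, hwr, hmod f g ▸ hfd, hpd⟩

theorem ascent_upperCIfd_of_surjective_ci_general {A B N : Type u} [CommRing A] [CommRing B]
    [IsLocalRing A] [IsLocalRing B] [Algebra A B] [AddCommGroup N] [Module A N] [Module B N]
    [IsScalarTower A B N] (hsurj : Function.Surjective (algebraMap A B))
    (hker : GeneratedByRegularSequence A (RingHom.ker (algebraMap A B)))
    (hfd : HasFiniteUpperCIDim A N) : HasFiniteUpperCIDim B N := by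
  obtain ⟨A', Q, _, _, _, _, hqd, hwr, hfdQ, -⟩ := hasFiniteUpperCIDim_iff.mp hfd
  let := Algebra.TensorProduct.rightAlgebra (R := A) (A := B) (B := A')
  let := ((algebraMap A' (B ⊗[A] A')).comp (algebraMap Q A')).toAlgebra
  have : IsScalarTower Q A' (B ⊗[A] A') := .of_algebraMap_eq fun _ ↦ rfl
  have : Algebra.IsPushout A A' B (B ⊗[A] A') := TensorProduct.isPushout'
  have : IsLocalRing A' := hqd.1
  have hqd' := hqd.of_isPushout (B' := B ⊗[A] A') hsurj hker
  have ⟨_, _, _, _, _, _, _, hsurjQ, hkerQ⟩ := hqd'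
  exact hasFiniteUpperCIDim_iff.mpr ⟨B ⊗[A] A', Q, _, _, _, _, hqd', hwr.of_isPushout hsurj,
    hfdQ.of_isPushout, hkerQ.projDimFinite hsurjQ⟩

/-- Ascent of complete intersection flat dimension. -/
theorem ascent_upperCIfd_of_surjective_ci (hsur : Function.Surjective (algebraMap R S))
    (hker : GeneratedByRegularSequence R (RingHom.ker (algebraMap R S)))
    
    (hfd : HasFiniteUpperCIDim R M) :
    HasFiniteUpperCIDim S M :=
  ascent_upperCIfd_of_surjective_ci_general hsur hker hfd
end

section
/- Let φ: (R,m,k) → (S,n,ℓ) be a local ring homomorphism between commutative Noetherian local rings which is essentially of finite type and complete intersection at n, and let M be a finitely generated S-module. If CI-fd_R M < ∞, then CI-dim_S M < ∞. -/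
/-!
Common definitions: André–Quillen homology via the standard (comonad/polynomial)
simplicial resolution, complete-intersection (flat) dimensions via quasi-deformations,
Cohen factorizations, Koszul homology `H₁`, and related notions.
-/

universe u

open TensorProduct IsLocalRing

variable (R S M : Type u) [CommRing R] [CommRing S]
  [IsLocalRing R] [IsLocalRing S] [IsNoetherianRing R] [IsNoetherianRing S]
  [Algebra R S] [IsLocalHom (algebraMap R S)]
  [AddCommGroup M] [Module R M] [Module S M] [IsScalarTower R S M] [Module.Finite S M]

/-!
Let `R → A → Ŝ` be a Cohen factorization of the semi-completion of `R → S` whose kernel is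
generated by a regular sequence. The fibre product `T` of `S` and `A` over `Ŝ` is a local ring,
usually not Noetherian, that surjects onto `S`. Adjoining finitely many elements of `T` to `R`, one
at a time and localizing at each step, gives a Noetherian local ring `P` with `R → P` weakly
regular, mapping onto `S` and such that the maximal ideal of `P` generates that of `A`. Passing from
`R` to `P` preserves finiteness of the CI-dimension, because a quasi-deformation of `R` extends to
localizations of polynomial rings.

The kernel of `P → S` is generated by a regular sequence: the completion of `P` maps onto `A`, with
kernel generated by a regular sequence since both rings are weakly regular over `R`, hence so is the
kernel of its map onto `Ŝ`, and this descends to `P` along the faithfully flat completion map.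
Finally, CI-dimension stays finite along `P → S`: a quasi-deformation `P → P' ← Q` induces
`S → S ⊗ P' ← Q`, and the new kernel is an extension of two regular sequences.
-/

section WeaklyRegular

open RingTheory.Sequence

section Modules

variable {C : Type*} [CommRing C] {M : Type*} [AddCommGroup M] [Module C M]

theorem isWeaklyRegular_of_subsingleton [Subsingleton M] (rs : List C) :
    IsWeaklyRegular M rs :=
  ⟨fun _ _ _ _ _ ↦ Subsingleton.elim _ _⟩

theorem isWeaklyRegular_of_exact {M₁ M₂ M₃ : Type*} [AddCommGroup M₁] [AddCommGroup M₂]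
    [AddCommGroup M₃] [Module C M₁] [Module C M₂] [Module C M₃] {f : M₁ →ₗ[C] M₂}
    {g : M₂ →ₗ[C] M₃} (hf : Function.Injective f) (hfg : Function.Exact f g)
    (hg : Function.Surjective g) {rs : List C} (h₁ : IsWeaklyRegular M₁ rs)
    (h₃ : IsWeaklyRegular M₃ rs) : IsWeaklyRegular M₂ rs := by
  induction rs generalizing M₁ M₂ M₃ with
  | nil => exact .nil C M₂
  | cons r rs ih =>
    rw [isWeaklyRegular_cons_iff] at h₁ h₃ ⊢
    refine ⟨isSMulRegular_of_range_eq_ker hf hfg.linearMap_ker_eq.symm h₁.1 h₃.1,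
      ih ?_ (QuotSMulTop.map_exact r hfg hg) (QuotSMulTop.map_surjective r hg) h₁.2 h₃.2⟩
    have exact_zero : Function.Exact (0 : M₁ →ₗ[C] M₁) f :=
      (LinearMap.exact_zero_iff_injective M₁ f).2 hf
    have := QuotSMulTop.map_first_exact_on_four_term_exact_of_isSMulRegular_last
      exact_zero hfg h₃.1
    rwa [map_zero, LinearMap.exact_zero_iff_injective] at this

theorem ofList_smul_top_inf_le_of_isWeaklyRegular_quotient {N : Submodule C M} {rs : List C}
    (h : IsWeaklyRegular (M ⧸ N) rs) :
    Ideal.ofList rs • (⊤ : Submodule C M) ⊓ N ≤ Ideal.ofList rs • N := by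
  rintro x ⟨hx, hxN⟩
  have hinj := map_first_exact_on_four_term_right_exact_of_isSMulRegular_last
    ((LinearMap.exact_zero_iff_injective N N.subtype).2 N.injective_subtype)
    (LinearMap.exact_subtype_mkQ N) N.mkQ_surjective h
  rw [← Submodule.mem_smul_top_iff _ _ (⟨x, hxN⟩ : N), ← Submodule.Quotient.mk_eq_zero]
  obtain ⟨y, hy⟩ := (hinj (Submodule.Quotient.mk ⟨x, hxN⟩)).1
    ((Submodule.Quotient.mk_eq_zero _).2 hx)
  rw [← hy]
  obtain ⟨y, rfl⟩ := Submodule.Quotient.mk_surjective _ y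
  simp only [Submodule.mapQ_apply, LinearMap.zero_apply, Submodule.Quotient.mk_zero]

theorem smul_top_inf_le_smul_of_flat_quotient {N : Submodule C M} [Module.Flat C (M ⧸ N)]
    (I : Ideal C) : I • (⊤ : Submodule C M) ⊓ N ≤ I • N := by
  rintro x ⟨hx, hxN⟩
  have hinj := LinearMap.lTensor_injective_of_exact_of_flat N.mkQ N.mkQ_surjective N.subtype
    N.injective_subtype (LinearMap.exact_subtype_mkQ N) (C ⧸ I)
  have hx0 : (1 : C ⧸ I) ⊗ₜ[C] x = 0 := by
    rw [← (TensorProduct.quotTensorEquivQuotSMul M I).map_eq_zero_iff]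
    exact (TensorProduct.quotTensorEquivQuotSMul_mk_tmul I 1 x).trans
      ((Submodule.Quotient.mk_eq_zero _).2 (by rwa [one_smul]))
  have hN0 : (1 : C ⧸ I) ⊗ₜ[C] (⟨x, hxN⟩ : N) = 0 :=
    hinj (by rwa [LinearMap.lTensor_tmul, map_zero])
  rw [← Submodule.mem_smul_top_iff _ _ (⟨x, hxN⟩ : N), ← Submodule.Quotient.mk_eq_zero]
  rw [← (TensorProduct.quotTensorEquivQuotSMul N I).map_eq_zero_iff] at hN0
  simpa only [one_smul] using (TensorProduct.quotTensorEquivQuotSMul_mk_tmul I 1 _).symm.trans hN0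

end Modules

section Quotients

variable {C : Type*} [CommRing C] {L : Ideal C}

theorem isWeaklyRegular_quotient_append_iff {as bs : List C} :
    IsWeaklyRegular (C ⧸ L) (as ++ bs) ↔
      IsWeaklyRegular (C ⧸ L) as ∧ IsWeaklyRegular (C ⧸ (L ⊔ Ideal.ofList as)) bs := by
  have hmap : Ideal.ofList as • (⊤ : Submodule C (C ⧸ L)) =
      Submodule.map L.mkQ (Ideal.ofList as) := by
    rw [← Submodule.range_mkQ L, ← Submodule.map_top, ← Submodule.map_smul'', smul_eq_mul,
      Ideal.mul_top]
  rw [isWeaklyRegular_append_iff, (Submodule.quotEquivOfEq _ _ hmap ≪≫ₗ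
    Submodule.quotientQuotientEquivQuotientSup L (Ideal.ofList as)).isWeaklyRegular_congr]

theorem isWeaklyRegular_quotient_singleton_iff {r : C} :
    IsWeaklyRegular (C ⧸ L) [r] ↔ ∀ c, r * c ∈ L → c ∈ L := by
  rw [isWeaklyRegular_singleton_iff, isSMulRegular_quotient_iff_mem_of_smul_mem]
  rfl

theorem isWeaklyRegular_quotient_cons_iff {r : C} {rs : List C} :
    IsWeaklyRegular (C ⧸ L) (r :: rs) ↔
      (∀ c, r * c ∈ L → c ∈ L) ∧ IsWeaklyRegular (C ⧸ (L ⊔ Ideal.span {r})) rs := by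
  rw [← List.singleton_append, isWeaklyRegular_quotient_append_iff,
    isWeaklyRegular_quotient_singleton_iff, Ideal.ofList_singleton]

theorem isWeaklyRegular_quotient_bot_iff {rs : List C} :
    IsWeaklyRegular (C ⧸ (⊥ : Ideal C)) rs ↔ IsWeaklyRegular C rs :=
  (Submodule.quotEquivOfEqBot (⊥ : Ideal C) rfl).isWeaklyRegular_congr rs

theorem mem_ofList {as : List C} {a : C} (h : a ∈ as) : a ∈ Ideal.ofList as :=
  Ideal.subset_span h

theorem ofList_eq_of_perm {as bs : List C} (h : as.Perm bs) :
    Ideal.ofList as = Ideal.ofList bs := by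
  simp only [Ideal.ofList, h.mem_iff]

theorem sup_span_singleton_eq_of_sub_unit_mul_mem {x y u : C} (hu : IsUnit u)
    (hy : y - u * x ∈ L) : L ⊔ Ideal.span {y} = L ⊔ Ideal.span {x} := by
  rw [← Ideal.span_singleton_mul_left_unit hu x]
  have key : ∀ {a b : C}, a - b ∈ L → L ⊔ Ideal.span {a} ≤ L ⊔ Ideal.span {b} := fun {a b} hab ↦
    sup_le le_sup_left <| (Ideal.span_singleton_le_iff_mem _).2 <|
      sub_add_cancel a b ▸ Submodule.add_mem_sup hab (Ideal.mem_span_singleton_self b)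
  exact le_antisymm (key hy) (key (by rwa [← neg_sub, neg_mem_iff]))

theorem isWeaklyRegular_quotient_append_singleton_of_sub_unit_mul_mem {as : List C} {x y u : C}
    (hu : IsUnit u) (h : IsWeaklyRegular (C ⧸ L) (as ++ [x]))
    (hy : y - u * x ∈ L ⊔ Ideal.ofList as) : IsWeaklyRegular (C ⧸ L) (as ++ [y]) := by
  rw [isWeaklyRegular_quotient_append_iff, isWeaklyRegular_quotient_singleton_iff] at h ⊢
  refine ⟨h.1, fun c hc ↦ h.2 c ?_⟩
  rw [← Ideal.unit_mul_mem_iff_mem _ hu]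
  convert sub_mem hc (Ideal.mul_mem_left _ c hy) using 1
  ring

end Quotients

section BaseChange

variable {C D : Type*} [CommRing C] [CommRing D] [Algebra C D]

theorem isWeaklyRegular_quotient_map_iff_of_surjective
    (h : Function.Surjective (algebraMap C D)) {L : Ideal D} {rs : List C} :
    IsWeaklyRegular (D ⧸ L) (rs.map (algebraMap C D)) ↔
      IsWeaklyRegular (C ⧸ L.comap (algebraMap C D)) rs := by
  have hker : L.comap (algebraMap C D) =
      LinearMap.ker ((Ideal.Quotient.mkₐ C L).comp (Algebra.ofId C D)).toLinearMap :=
    Ideal.ext fun c ↦ (Ideal.Quotient.eq_zero_iff_mem (a := algebraMap C D c)).symm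
  rw [isWeaklyRegular_map_algebraMap_iff, (Submodule.quotEquivOfEq _ _ hker ≪≫ₗ
    LinearMap.quotKerEquivOfSurjective _
      (Ideal.Quotient.mk_surjective.comp h)).isWeaklyRegular_congr]

theorem isWeaklyRegular_quotient_map_of_flat [Module.Flat C D] {L : Ideal C} {rs : List C}
    (h : IsWeaklyRegular (C ⧸ L) rs) :
    IsWeaklyRegular (D ⧸ L.map (algebraMap C D)) (rs.map (algebraMap C D)) := by
  rw [isWeaklyRegular_map_algebraMap_iff, ((Algebra.TensorProduct.quotIdealMapEquivTensorQuot D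
    L).toLinearEquiv.restrictScalars C).isWeaklyRegular_congr]
  exact h.isWeaklyRegular_lTensor

theorem isWeaklyRegular_quotient_of_map_of_faithfullyFlat [Module.FaithfullyFlat C D]
    {L : Ideal C} {rs : List C}
    (h : IsWeaklyRegular (D ⧸ L.map (algebraMap C D)) (rs.map (algebraMap C D))) :
    IsWeaklyRegular (C ⧸ L) rs := by
  induction rs generalizing L with
  | nil => exact .nil C _
  | cons r rs ih =>
    rw [List.map_cons, isWeaklyRegular_quotient_cons_iff] at h
    refine isWeaklyRegular_quotient_cons_iff.2 ⟨fun c hc ↦ ?_, ih ?_⟩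
    · rw [← Ideal.comap_map_eq_self_of_faithfullyFlat (B := D) L]
      exact h.1 _ (map_mul (algebraMap C D) r c ▸ Ideal.mem_map_of_mem _ hc)
    · rw [Ideal.map_sup, Ideal.map_span, Set.image_singleton]
      exact h.2

end BaseChange

section Noetherian

variable {C : Type*} [CommRing C] [IsLocalRing C] {L : Ideal C}

theorem exists_perm_cons_of_mem_ofList {xs : List C} {a : C} (ha : a ∈ Ideal.ofList xs)
    (ha' : a ∉ maximalIdeal C * Ideal.ofList xs) :
    ∃ x xs' u, xs.Perm (x :: xs') ∧ IsUnit u ∧ a - u * x ∈ Ideal.ofList xs' := by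
  induction xs generalizing a with
  | nil => exact absurd (by simpa using ha) ha'
  | cons x xs ih =>
    rw [Ideal.ofList_cons] at ha ha'
    obtain ⟨b, hb, c, hc, rfl⟩ := Submodule.mem_sup.1 ha
    obtain ⟨d, rfl⟩ := Ideal.mem_span_singleton'.1 hb
    by_cases hd : IsUnit d
    · exact ⟨x, xs, d, .refl _, hd, by rwa [add_sub_cancel_left]⟩
    have hdx : d * x ∈ maximalIdeal C * Ideal.span {x} :=
      Ideal.mul_mem_mul hd (Ideal.mem_span_singleton_self x)
    rw [Ideal.mul_sup] at ha'
    obtain ⟨y, ys, u, hperm, hu, hy⟩ := ih hc fun h ↦ ha' (Submodule.add_mem_sup hdx h)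
    refine ⟨y, x :: ys, u, (hperm.cons x).trans (.swap y x ys), hu, ?_⟩
    rw [Ideal.ofList_cons, add_sub_assoc]
    exact Submodule.add_mem_sup hb hy

variable [IsNoetherianRing C]

theorem exists_isWeaklyRegular_quotient_cons {xs : List C} {g : C}
    (hxs : IsWeaklyRegular (C ⧸ L) xs) (hL : L ⊔ Ideal.ofList xs ≤ maximalIdeal C)
    (hg : g ∈ L ⊔ Ideal.ofList xs) (hg' : g ∉ L ⊔ maximalIdeal C * (L ⊔ Ideal.ofList xs)) :
    ∃ ys, IsWeaklyRegular (C ⧸ L) (g :: ys) ∧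
      L ⊔ Ideal.ofList (g :: ys) = L ⊔ Ideal.ofList xs := by
  obtain ⟨l, hl, a, ha, rfl⟩ := Submodule.mem_sup.1 hg
  have ha' : a ∉ maximalIdeal C * Ideal.ofList xs := fun h ↦
    hg' (Submodule.add_mem_sup hl (Ideal.mul_mono_right le_sup_right h))
  obtain ⟨x, ys, u, hperm, hu, hx⟩ := exists_perm_cons_of_mem_ofList ha ha'
  have hmem : l + a - u * x ∈ L ⊔ Ideal.ofList ys := by
    rw [add_sub_assoc]
    exact Submodule.add_mem_sup hl hx
  have hxs' : IsWeaklyRegular (C ⧸ L) (ys ++ [x]) :=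
    isWeaklyRegular_of_perm_of_subset_maximalIdeal hxs
      (hperm.trans (List.perm_append_singleton x ys).symm)
      fun r hr ↦ hL (Ideal.mem_sup_right (mem_ofList hr))
  have hspan : L ⊔ Ideal.ofList ((l + a) :: ys) = L ⊔ Ideal.ofList xs := by
    rw [ofList_eq_of_perm hperm, Ideal.ofList_cons, Ideal.ofList_cons, ← sup_assoc, ← sup_assoc,
      sup_right_comm, sup_right_comm _ (Ideal.span {x}),
      sup_span_singleton_eq_of_sub_unit_mul_mem hu hmem]
  refine ⟨ys, isWeaklyRegular_of_perm_of_subset_maximalIdeal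
    (isWeaklyRegular_quotient_append_singleton_of_sub_unit_mul_mem hu hxs' hmem)
    (List.perm_append_singleton _ ys) fun r hr ↦ hL (hspan ▸ Ideal.mem_sup_right ?_), hspan⟩
  exact mem_ofList ((List.perm_append_singleton _ ys).mem_iff.1 hr)

theorem exists_sublist_isWeaklyRegular_quotient {xs gs : List C}
    (hxs : IsWeaklyRegular (C ⧸ L) xs) (hL : L ⊔ Ideal.ofList xs ≤ maximalIdeal C)
    (hgs : L ⊔ Ideal.ofList gs = L ⊔ Ideal.ofList xs) :
    ∃ gs', gs'.Sublist gs ∧ IsWeaklyRegular (C ⧸ L) gs' ∧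
      L ⊔ Ideal.ofList gs' = L ⊔ Ideal.ofList xs := by
  induction gs generalizing L xs with
  | nil => exact ⟨[], .refl _, .nil C _, hgs⟩
  | cons g gs ih =>
    by_cases hg : g ∈ L ⊔ maximalIdeal C * (L ⊔ Ideal.ofList xs)
    · have hgs' : L ⊔ Ideal.ofList gs = L ⊔ Ideal.ofList xs := by
        refine le_antisymm (hgs ▸ sup_le_sup_left (Ideal.ofList_cons g gs ▸ le_sup_right) L) ?_
        refine Submodule.le_of_le_smul_of_le_jacobson_bot (IsNoetherian.noetherian _)
          (maximalIdeal_le_jacobson ⊥) ?_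
        conv_lhs => rw [← hgs]
        rw [Ideal.ofList_cons, sup_left_comm]
        refine sup_le ((Ideal.span_singleton_le_iff_mem _).2 ?_) le_sup_left
        exact (sup_le_sup_right le_sup_left _ : _ ≤ L ⊔ Ideal.ofList gs ⊔ _) hg
      obtain ⟨gs', hsub, h⟩ := ih hxs hL hgs'
      exact ⟨gs', hsub.cons g, h⟩
    · obtain ⟨ys, hys, hspan⟩ := exists_isWeaklyRegular_quotient_cons hxs hL
        (hgs ▸ Ideal.mem_sup_right (mem_ofList List.mem_cons_self)) hg
      rw [← hspan, Ideal.ofList_cons, ← sup_assoc] at hL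
      rw [← hspan, Ideal.ofList_cons, Ideal.ofList_cons, ← sup_assoc, ← sup_assoc] at hgs
      rw [isWeaklyRegular_quotient_cons_iff] at hys
      obtain ⟨gs', hsub, hreg, hspan'⟩ := ih hys.2 hL hgs
      refine ⟨g :: gs', hsub.cons_cons g, isWeaklyRegular_quotient_cons_iff.2 ⟨hys.1, hreg⟩, ?_⟩
      rw [← hspan, Ideal.ofList_cons, Ideal.ofList_cons, ← sup_assoc, hspan', sup_assoc]

theorem mem_of_forall_mem_sup_pow {I : Ideal C} (hI : I ≠ ⊤) {c : C}
    (h : ∀ n, c ∈ L ⊔ I ^ n) : c ∈ L := by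
  rw [← Ideal.Quotient.eq_zero_iff_mem, ← Submodule.mem_bot C,
    ← Ideal.iInf_pow_smul_eq_bot_of_isLocalRing (M := C ⧸ L) I hI, Submodule.mem_iInf]
  intro n
  obtain ⟨a, ha, b, hb, rfl⟩ := Submodule.mem_sup.1 (h n)
  have hmk : Ideal.Quotient.mk L (a + b) = b • (1 : C ⧸ L) := by
    rw [map_add, Ideal.Quotient.eq_zero_iff_mem.2 ha, zero_add, Algebra.smul_def, mul_one]
    rfl
  exact hmk ▸ Submodule.smul_mem_smul hb trivial

theorem isWeaklyRegular_quotient_of_forall_pow {I : Ideal C} (hI : I ≠ ⊤) {rs : List C}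
    (h : ∀ n, IsWeaklyRegular (C ⧸ (L ⊔ I ^ n)) rs) : IsWeaklyRegular (C ⧸ L) rs := by
  induction rs generalizing L with
  | nil => exact .nil C _
  | cons r rs ih =>
    simp only [isWeaklyRegular_quotient_cons_iff] at h ⊢
    exact ⟨fun c hc ↦ mem_of_forall_mem_sup_pow hI fun n ↦ (h n).1 c (Ideal.mem_sup_left hc),
      ih fun n ↦ sup_right_comm L (I ^ n) _ ▸ (h n).2⟩

end Noetherian

section Fibre

theorem isFiniteLength_quotient_maximalIdeal_pow (R : Type*) [CommRing R] [IsLocalRing R]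
    [IsNoetherianRing R] (n : ℕ) : IsFiniteLength R (R ⧸ maximalIdeal R ^ n) := by
  rcases eq_or_ne n 0 with rfl | hn
  · have : Subsingleton (R ⧸ maximalIdeal R ^ 0) := by
      rw [Ideal.Quotient.subsingleton_iff, pow_zero, Ideal.one_eq_top]
    exact .of_subsingleton
  have hmin : maximalIdeal R ∈ (maximalIdeal R ^ n).minimalPrimes :=
    ⟨⟨inferInstance, Ideal.pow_le_self hn⟩, fun q hq _ ↦ hq.1.le_of_pow_le hq.2⟩
  have := quotient_artinian_of_mem_minimalPrimes_of_isLocalRing _ hmin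
  exact isFiniteLength_iff_isNoetherian_isArtinian.2 ⟨inferInstance,
    isArtinian_of_surjective_algebraMap (Ideal.Quotient.mk_surjective (I := maximalIdeal R ^ n))⟩

variable {R C : Type*} [CommRing R] [IsLocalRing R] [CommRing C] [Algebra R C]
  [Module.Flat R C]

theorem isWeaklyRegular_tensorProduct_of_isFiniteLength {rs : List C}
    (h : IsWeaklyRegular (C ⧸ (maximalIdeal R).map (algebraMap R C)) rs)
    {N : Type*} [AddCommGroup N] [Module R N] (hN : IsFiniteLength R N) :
    IsWeaklyRegular (C ⊗[R] N) rs := by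
  induction hN with
  | of_subsingleton => exact isWeaklyRegular_of_subsingleton rs
  | @of_simple_quotient N _ _ N' _ _ ih =>
    refine isWeaklyRegular_of_exact (f := N'.subtype.baseChange C) (g := N'.mkQ.baseChange C)
      (Module.Flat.lTensor_preserves_injective_linearMap _ N'.injective_subtype)
      (lTensor_exact C (LinearMap.exact_subtype_mkQ N') N'.mkQ_surjective)
      (LinearMap.lTensor_surjective C N'.mkQ_surjective) ih ?_
    obtain ⟨I, hI, ⟨e⟩⟩ := isSimpleModule_iff_quot_maximal.1 (‹IsSimpleModule R (N ⧸ N')›)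
    rw [(e.baseChange R C _ _).isWeaklyRegular_congr, eq_maximalIdeal hI,
      ← (Algebra.TensorProduct.quotIdealMapEquivTensorQuot C
        (maximalIdeal R)).toLinearEquiv.isWeaklyRegular_congr]
    exact h

theorem isWeaklyRegular_of_quotient_map_maximalIdeal [IsNoetherianRing R] [IsLocalRing C]
    [IsNoetherianRing C] [IsLocalHom (algebraMap R C)] {rs : List C}
    (h : IsWeaklyRegular (C ⧸ (maximalIdeal R).map (algebraMap R C)) rs) :
    IsWeaklyRegular C rs := by
  rw [← isWeaklyRegular_quotient_bot_iff]
  refine isWeaklyRegular_quotient_of_forall_pow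
    (map_maximalIdeal_lt_top (algebraMap R C)).ne fun n ↦ ?_
  rw [bot_sup_eq, ← Ideal.map_pow, (Algebra.TensorProduct.quotIdealMapEquivTensorQuot C
    (maximalIdeal R ^ n)).toLinearEquiv.isWeaklyRegular_congr]
  exact isWeaklyRegular_tensorProduct_of_isFiniteLength h
    (isFiniteLength_quotient_maximalIdeal_pow R n)

end Fibre

end WeaklyRegular

section RegularIdeals

open RingTheory.Sequence

theorem comap_map_eq_sup_ker {A B : Type*} [CommRing A] [CommRing B] {f : A →+* B}
    (hf : Function.Surjective f) (I : Ideal A) : (I.map f).comap f = I ⊔ RingHom.ker f :=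
  Ideal.comap_map_of_surjective f hf I

theorem comap_maximalIdeal_of_surjective {A B : Type*} [CommRing A] [CommRing B] [IsLocalRing A]
    [IsLocalRing B] {f : A →+* B} (hf : Function.Surjective f) :
    (maximalIdeal B).comap f = maximalIdeal A :=
  eq_maximalIdeal (Ideal.comap_isMaximal_of_surjective f hf)

theorem exists_ofList_eq_of_fg {A : Type*} [CommRing A] {I : Ideal A} (hI : I.FG) :
    ∃ l : List A, Ideal.ofList l = I := by
  obtain ⟨s, rfl⟩ := hI
  exact ⟨s.toList, by simp only [Ideal.ofList, Finset.mem_toList]; rfl⟩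

section Ideal

variable {A : Type u} [CommRing A] {I : Ideal A}

theorem generatedByRegularSequence_iff :
    GeneratedByRegularSequence A I ↔
      I ≠ ⊤ ∧ ∃ rs : List A, IsWeaklyRegular A rs ∧ Ideal.ofList rs = I := by
  constructor
  · rintro ⟨rs, hrs, rfl⟩
    refine ⟨fun h ↦ hrs.top_ne_smul ?_, rs, hrs.toIsWeaklyRegular, rfl⟩
    rw [smul_eq_mul, Ideal.mul_top]
    exact h.symm
  · rintro ⟨hI, rs, hrs, rfl⟩
    refine ⟨rs, ⟨hrs, fun h ↦ hI ?_⟩, rfl⟩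
    rwa [smul_eq_mul, Ideal.mul_top, eq_comm] at h

theorem GeneratedByRegularSequence.ne_top (h : GeneratedByRegularSequence A I) : I ≠ ⊤ :=
  (generatedByRegularSequence_iff.1 h).1

variable {B : Type u} [CommRing B]

theorem GeneratedByRegularSequence.map_of_flat_s6 [Algebra A B] [Module.Flat A B]
    (h : GeneratedByRegularSequence A I) (hI : I.map (algebraMap A B) ≠ ⊤) :
    GeneratedByRegularSequence B (I.map (algebraMap A B)) := by
  obtain ⟨-, rs, hrs, rfl⟩ := generatedByRegularSequence_iff.1 h
  refine generatedByRegularSequence_iff.2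
    ⟨hI, rs.map (algebraMap A B), ?_, (Ideal.map_ofList _ _).symm⟩
  rw [← isWeaklyRegular_quotient_bot_iff] at hrs ⊢
  exact Ideal.map_bot (f := algebraMap A B) ▸ isWeaklyRegular_quotient_map_of_flat hrs

theorem GeneratedByRegularSequence.of_map_of_faithfullyFlat [Algebra A B]
    [Module.FaithfullyFlat A B] [IsLocalRing B] [IsNoetherianRing B] (hI : I.FG)
    (h : GeneratedByRegularSequence B (I.map (algebraMap A B))) :
    GeneratedByRegularSequence A I := by
  obtain ⟨hne, rs, hrs, hspan⟩ := generatedByRegularSequence_iff.1 h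
  obtain ⟨gs, rfl⟩ := exists_ofList_eq_of_fg hI
  obtain ⟨gs', hsub, hreg, hgs'⟩ := exists_sublist_isWeaklyRegular_quotient (L := ⊥)
    (isWeaklyRegular_quotient_bot_iff.2 hrs)
    (by rw [bot_sup_eq, hspan]; exact le_maximalIdeal hne)
    (gs := gs.map (algebraMap A B)) (by rw [hspan, Ideal.map_ofList])
  obtain ⟨l, -, rfl⟩ := List.sublist_map_iff.1 hsub
  refine generatedByRegularSequence_iff.2 ⟨?_, l, ?_, ?_⟩
  · rintro htop
    exact hne (by rw [htop, Ideal.map_top])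
  · rw [← isWeaklyRegular_quotient_bot_iff]
    exact isWeaklyRegular_quotient_of_map_of_faithfullyFlat (D := B) (by rwa [Ideal.map_bot])
  · apply Ideal.map_injective_of_faithfullyFlat (B := B)
    rwa [bot_sup_eq, bot_sup_eq, hspan, ← Ideal.map_ofList] at hgs'

theorem GeneratedByRegularSequence.comap_of_surjective {J : Ideal B} {f : A →+* B}
    (hf : Function.Surjective f) (hker : GeneratedByRegularSequence A (RingHom.ker f))
    (hJ : GeneratedByRegularSequence B J) : GeneratedByRegularSequence A (J.comap f) := by
  let := f.toAlgebra
  obtain ⟨-, as, has, hspan⟩ := generatedByRegularSequence_iff.1 hker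
  obtain ⟨hne, bs, hbs, rfl⟩ := generatedByRegularSequence_iff.1 hJ
  obtain ⟨bs, rfl⟩ := List.map_surjective_iff.2 hf bs
  refine generatedByRegularSequence_iff.2 ⟨Ideal.comap_ne_top f hne, as ++ bs, ?_, ?_⟩
  · rw [← isWeaklyRegular_quotient_bot_iff] at has hbs ⊢
    refine isWeaklyRegular_quotient_append_iff.2 ⟨has, ?_⟩
    rw [bot_sup_eq, hspan]
    exact (isWeaklyRegular_quotient_map_iff_of_surjective hf).1 hbs
  · rw [Ideal.ofList_append, hspan, ← Ideal.map_ofList, comap_map_eq_sup_ker hf, sup_comm]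

end Ideal

section RegularLocal

variable {A : Type u} [CommRing A] [IsLocalRing A] [IsNoetherianRing A]

theorem isRegularLocal_quotient_iff {L : Ideal A} :
    IsRegularLocal (A ⧸ L) ↔ ∃ rs : List A,
      IsWeaklyRegular (A ⧸ L) rs ∧ L ⊔ Ideal.ofList rs = maximalIdeal A := by
  have hmk : Function.Surjective (algebraMap A (A ⧸ L)) := Ideal.Quotient.mk_surjective
  have hreg (rs : List A) : IsWeaklyRegular (A ⧸ L) rs ↔
      IsWeaklyRegular (A ⧸ L) (rs.map (algebraMap A (A ⧸ L))) :=
    (isWeaklyRegular_map_algebraMap_iff (A ⧸ L) (A ⧸ L) rs).symm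
  have hcomap (rs : List A) : (Ideal.ofList (rs.map (algebraMap A (A ⧸ L)))).comap
      (algebraMap A (A ⧸ L)) = L ⊔ Ideal.ofList rs := by
    rw [← Ideal.map_ofList, comap_map_eq_sup_ker hmk, Ideal.Quotient.algebraMap_eq,
      Ideal.mk_ker, sup_comm]
  constructor
  · rintro ⟨-, hloc, h⟩
    obtain ⟨-, rs, hrs, hspan⟩ := generatedByRegularSequence_iff.1 h
    obtain ⟨rs, rfl⟩ := List.map_surjective_iff.2 hmk rs
    exact ⟨rs, (hreg rs).2 hrs, by
      rw [← hcomap, hspan, comap_maximalIdeal_of_surjective hmk]⟩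
  · rintro ⟨rs, hrs, hspan⟩
    have hL : L ≠ ⊤ := ((hspan ▸ le_sup_left : L ≤ maximalIdeal A).trans_lt
      (maximalIdeal.isMaximal A).ne_top.lt_top).ne
    have : Nontrivial (A ⧸ L) := Ideal.Quotient.nontrivial_iff.2 hL
    have : IsLocalRing (A ⧸ L) := .of_surjective' (algebraMap A (A ⧸ L)) hmk
    refine ⟨inferInstance, this, generatedByRegularSequence_iff.2
      ⟨(maximalIdeal.isMaximal _).ne_top, _, (hreg rs).1 hrs, ?_⟩⟩
    apply Ideal.comap_injective_of_surjective _ hmk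
    rw [hcomap, hspan, comap_maximalIdeal_of_surjective hmk]

theorem exists_isWeaklyRegular_quotient_of_isRegularLocal {L K : Ideal A}
    (hL : IsRegularLocal (A ⧸ L)) (hLK : IsRegularLocal (A ⧸ (L ⊔ K))) :
    ∃ l, IsWeaklyRegular (A ⧸ L) l ∧ Ideal.ofList l ≤ K ∧ K ≤ L ⊔ Ideal.ofList l := by
  obtain ⟨rs, hrs, hspan⟩ := isRegularLocal_quotient_iff.1 hL
  obtain ⟨zs, hzs, hzspan⟩ := isRegularLocal_quotient_iff.1 hLK
  obtain ⟨ks, rfl⟩ := exists_ofList_eq_of_fg (IsNoetherian.noetherian K)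
  obtain ⟨gs, hsub, hgs, hgspan⟩ := exists_sublist_isWeaklyRegular_quotient hrs hspan.le
    (gs := ks ++ zs) (by rw [hspan, Ideal.ofList_append, ← sup_assoc, hzspan])
  obtain ⟨l, l', rfl, hl, hl'⟩ := List.sublist_append_iff.1 hsub
  have hzs_le : ∀ z ∈ zs, z ∈ maximalIdeal A := fun z hz ↦
    hzspan ▸ Ideal.mem_sup_right (mem_ofList hz)
  have hl'reg : IsWeaklyRegular (A ⧸ (L ⊔ Ideal.ofList ks)) l' := by
    obtain ⟨l'', hperm⟩ := hl'.exists_perm_append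
    exact (isWeaklyRegular_quotient_append_iff.1
      (isWeaklyRegular_of_perm_of_subset_maximalIdeal hzs hperm hzs_le)).1
  have hl_le : Ideal.ofList l ≤ Ideal.ofList ks := Ideal.span_mono hl.subset
  refine ⟨l, (isWeaklyRegular_quotient_append_iff.1 hgs).1, hl_le, (le_sup_right (a := L)).trans ?_⟩
  refine Submodule.le_of_le_smul_of_le_jacobson_bot (IsNoetherian.noetherian _)
    (maximalIdeal_le_jacobson ⊥) fun x hx ↦ ?_
  have hxm : x ∈ L ⊔ Ideal.ofList l ⊔ Ideal.ofList l' := by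
    rw [sup_assoc, ← Ideal.ofList_append, hgspan, hspan, ← hzspan]
    exact Ideal.mem_sup_left hx
  obtain ⟨a, ha, b, hb, rfl⟩ := Submodule.mem_sup.1 hxm
  have hbK : b ∈ L ⊔ Ideal.ofList ks :=
    (Submodule.add_mem_iff_right _ (sup_le_sup_left hl_le L ha)).1 hx
  refine Submodule.add_mem_sup ha (Submodule.smul_mono_left (Ideal.span_le.2 fun z hz ↦
    hzs_le z (hl'.subset hz)) (ofList_smul_top_inf_le_of_isWeaklyRegular_quotient hl'reg
      ⟨?_, hbK⟩))
  rwa [smul_eq_mul, Ideal.mul_top]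

end RegularLocal

section Fibre

variable {R C : Type u} [CommRing R] [IsLocalRing R] [CommRing C] [Algebra R C]

theorem isWeaklyRegularHom_algebraMap_iff :
    IsWeaklyRegularHom R C (algebraMap R C) ↔
      IsLocalHom (algebraMap R C) ∧ Module.Flat R C ∧
        IsRegularLocal (C ⧸ (maximalIdeal R).map (algebraMap R C)) := by
  rw [← RingHom.flat_algebraMap_iff]
  rfl

variable [IsLocalRing C] [IsNoetherianRing C]

variable {D : Type u} [CommRing D] [IsLocalRing D] [IsNoetherianRing D] [Algebra C D]
  [Algebra R D] [IsScalarTower R C D]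

theorem IsWeaklyRegularHom.trans (hC : IsWeaklyRegularHom R C (algebraMap R C))
    (hD : IsWeaklyRegularHom C D (algebraMap C D)) : IsWeaklyRegularHom R D (algebraMap R D) := by
  obtain ⟨_, _, hC⟩ := isWeaklyRegularHom_algebraMap_iff.1 hC
  obtain ⟨_, _, hD⟩ := isWeaklyRegularHom_algebraMap_iff.1 hD
  obtain ⟨rs, hrs, hspan⟩ := isRegularLocal_quotient_iff.1 hC
  obtain ⟨ss, hss, hspan'⟩ := isRegularLocal_quotient_iff.1 hD
  have hmap : (maximalIdeal R).map (algebraMap R D) ⊔ Ideal.ofList (rs.map (algebraMap C D)) =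
      (maximalIdeal C).map (algebraMap C D) := by
    rw [← hspan, Ideal.map_sup, Ideal.map_map, Ideal.map_ofList, IsScalarTower.algebraMap_eq R C D]
  refine isWeaklyRegularHom_algebraMap_iff.2 ⟨?_, Module.Flat.trans R C D,
    isRegularLocal_quotient_iff.2 ⟨rs.map (algebraMap C D) ++ ss,
      isWeaklyRegular_quotient_append_iff.2 ⟨?_, hmap ▸ hss⟩, ?_⟩⟩
  · rw [IsScalarTower.algebraMap_eq R C D]
    infer_instance
  · rw [IsScalarTower.algebraMap_eq R C D, ← Ideal.map_map]
    exact isWeaklyRegular_quotient_map_of_flat hrs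
  · rw [Ideal.ofList_append, ← sup_assoc, hmap, hspan']

variable [IsNoetherianRing R]

theorem generatedByRegularSequence_of_flat_quotient [Module.Flat R C]
    [IsLocalHom (algebraMap R C)] {K : Ideal C} (hK : K ≠ ⊤) [Module.Flat R (C ⧸ K)] {l : List C}
    (hl : IsWeaklyRegular (C ⧸ (maximalIdeal R).map (algebraMap R C)) l)
    (hlK : Ideal.ofList l ≤ K)
    (hKl : K ≤ (maximalIdeal R).map (algebraMap R C) ⊔ Ideal.ofList l) :
    GeneratedByRegularSequence C K := by
  refine generatedByRegularSequence_iff.2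
    ⟨hK, l, isWeaklyRegular_of_quotient_map_maximalIdeal hl, hlK.antisymm ?_⟩
  refine Submodule.le_of_le_smul_of_le_jacobson_bot (IsNoetherian.noetherian _)
    (maximalIdeal_le_jacobson ⊥) fun x hx ↦ ?_
  obtain ⟨b, hb, a, ha, rfl⟩ := Submodule.mem_sup.1 (hKl hx)
  have hbK : b ∈ K := (Submodule.add_mem_iff_left _ (hlK ha)).1 hx
  have : Module.Flat R (C ⧸ K.restrictScalars R) := ‹Module.Flat R (C ⧸ K)›
  have hbmK : b ∈ maximalIdeal R • K.restrictScalars R :=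
    smul_top_inf_le_smul_of_flat_quotient (maximalIdeal R)
      ⟨by rwa [Ideal.smul_top_eq_map], hbK⟩
  rw [add_comm]
  refine Submodule.add_mem_sup ha (Submodule.smul_mono_left
    (map_maximalIdeal_le (algebraMap R C)) ?_)
  rwa [← Ideal.smul_restrictScalars] at hbmK

theorem IsWeaklyRegularHom.generatedByRegularSequence_ker
    (hC : IsWeaklyRegularHom R C (algebraMap R C)) (hD : IsWeaklyRegularHom R D (algebraMap R D))
    (hCD : Function.Surjective (algebraMap C D)) :
    GeneratedByRegularSequence C (RingHom.ker (algebraMap C D)) := by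
  obtain ⟨_, _, hC⟩ := isWeaklyRegularHom_algebraMap_iff.1 hC
  obtain ⟨_, _, hD⟩ := isWeaklyRegularHom_algebraMap_iff.1 hD
  have hCK : IsRegularLocal (C ⧸ ((maximalIdeal R).map (algebraMap R C) ⊔
      RingHom.ker (algebraMap C D))) := by
    obtain ⟨rs, hrs, hspan⟩ := isRegularLocal_quotient_iff.1 hD
    obtain ⟨rs, rfl⟩ := List.map_surjective_iff.2 hCD rs
    rw [IsScalarTower.algebraMap_eq R C D, ← Ideal.map_map] at hrs hspan
    rw [← comap_map_eq_sup_ker hCD]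
    refine isRegularLocal_quotient_iff.2
      ⟨rs, (isWeaklyRegular_quotient_map_iff_of_surjective hCD).1 hrs, ?_⟩
    rw [← comap_maximalIdeal_of_surjective hCD, ← hspan, ← Ideal.map_ofList, ← Ideal.map_sup,
      comap_map_eq_sup_ker hCD, comap_map_eq_sup_ker hCD, sup_right_comm]
  obtain ⟨l, hl, hlK, hKl⟩ := exists_isWeaklyRegular_quotient_of_isRegularLocal hC hCK
  have : Module.Flat R (C ⧸ RingHom.ker (algebraMap C D)) := .of_linearEquiv
    (Ideal.quotientKerAlgEquivOfSurjective (f := IsScalarTower.toAlgHom R C D) hCD).toLinearEquiv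
  exact generatedByRegularSequence_of_flat_quotient (RingHom.ker_ne_top _) hl hlK hKl

end Fibre

end RegularIdeals

section Completion

theorem exists_mvPowerSeries_ringHom {A B : Type*} [CommRing A] [CommRing B] (f : A →+* B)
    (J : Ideal B) [hJ : IsAdicComplete J B] {n : ℕ} (b : Fin n → B) (hb : ∀ i, b i ∈ J) :
    ∃ F : MvPowerSeries (Fin n) A →+* B,
      (∀ a, F (MvPowerSeries.C a) = f a) ∧ ∀ i, F (MvPowerSeries.X i) = b i := by
  let : WithIdeal B := ⟨J⟩
  let : UniformSpace A := ⊥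
  have : DiscreteUniformity A := ⟨rfl⟩
  have hadic : IsAdic J := rfl
  obtain ⟨_, _⟩ := hadic.isAdicComplete_iff.1 hJ
  have hf : Continuous f := continuous_of_discreteTopology
  have hb' : MvPowerSeries.HasEval b :=
    ⟨fun i ↦ WithIdeal.isTopologicallyNilpotent_of_mem (hb i), by
      simp only [Filter.cofinite_eq_bot, Filter.tendsto_bot]⟩
  refine ⟨MvPowerSeries.eval₂Hom hf hb', fun a ↦ ?_, fun i ↦ ?_⟩
  · rw [MvPowerSeries.coe_eval₂Hom, MvPowerSeries.eval₂_C]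
  · rw [MvPowerSeries.coe_eval₂Hom, MvPowerSeries.eval₂_X]

theorem surjective_of_forall_exists_sub_mem_map {A B : Type*} [CommRing A] [CommRing B]
    (f : A →+* B) (I : Ideal A) [IsPrecomplete I A] [IsHausdorff (I.map f) B]
    (h : ∀ b, ∃ a, b - f a ∈ I.map f) : Function.Surjective f := by
  refine surjective_of_mk_map_comp_surjective (I := I) f fun y ↦ ?_
  obtain ⟨b, rfl⟩ := Ideal.Quotient.mk_surjective y
  obtain ⟨a, ha⟩ := h b
  exact ⟨a, (Ideal.Quotient.eq.2 ha).symm⟩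

theorem isNoetherianRing_of_isAdicComplete_map {A B : Type*} [CommRing A] [CommRing B]
    [IsNoetherianRing A] (f : A →+* B) (I : Ideal A) [IsAdicComplete (I.map f) B]
    (h : ∀ b, ∃ a, b - f a ∈ I.map f) : IsNoetherianRing B := by
  obtain ⟨n, a, ha⟩ :=
    Submodule.fg_iff_exists_fin_generating_family.1 (IsNoetherian.noetherian I)
  obtain ⟨F, hFC, hFX⟩ := exists_mvPowerSeries_ringHom f (I.map f) (fun i ↦ f (a i))
    fun i ↦ Ideal.mem_map_of_mem _ (ha ▸ Submodule.subset_span ⟨i, rfl⟩)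
  have hmap : (Ideal.span (Set.range MvPowerSeries.X) : Ideal (MvPowerSeries (Fin n) A)).map F =
      I.map f := by
    rw [← ha, Ideal.submodule_span_eq, Ideal.map_span, Ideal.map_span, ← Set.range_comp,
      ← Set.range_comp]
    exact congrArg (Ideal.span <| Set.range ·) (funext hFX)
  have : IsHausdorff
      ((Ideal.span (Set.range MvPowerSeries.X) : Ideal (MvPowerSeries (Fin n) A)).map F) B := by
    rw [hmap]
    infer_instance
  refine isNoetherianRing_of_surjective _ _ F (surjective_of_forall_exists_sub_mem_map F
    (Ideal.span (Set.range MvPowerSeries.X)) fun b ↦ ?_)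
  obtain ⟨x, hx⟩ := h b
  exact ⟨MvPowerSeries.C x, by rwa [hFC, hmap]⟩

theorem exists_sub_mem_map_pow {A B : Type*} [CommRing A] [CommRing B] (f : A →+* B)
    (I : Ideal A) (h : ∀ b, ∃ a, b - f a ∈ I.map f) (n : ℕ) (b : B) :
    ∃ a, b - f a ∈ (I ^ n).map f := by
  induction n generalizing b with
  | zero => exact ⟨0, by simp only [pow_zero, Ideal.one_eq_top, Ideal.map_top, Submodule.mem_top]⟩
  | succ n ih =>
    suffices H : ∀ x ∈ (I ^ n).map f, ∃ a, x - f a ∈ (I ^ (n + 1)).map f by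
      obtain ⟨a, ha⟩ := ih b
      obtain ⟨a', ha'⟩ := H _ ha
      exact ⟨a + a', by rwa [map_add, ← sub_sub]⟩
    intro x hx
    induction hx using Submodule.span_induction with
    | mem x hx =>
      obtain ⟨a, -, rfl⟩ := hx
      exact ⟨a, by rw [sub_self]; exact zero_mem _⟩
    | zero => exact ⟨0, by rw [map_zero, sub_zero]; exact zero_mem _⟩
    | add x y _ _ hx hy =>
      obtain ⟨a, ha⟩ := hx
      obtain ⟨a', ha'⟩ := hy
      exact ⟨a + a', by rw [map_add, add_sub_add_comm]; exact add_mem ha ha'⟩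
    | smul y x hxn hx =>
      obtain ⟨a, ha⟩ := hx
      obtain ⟨c, hc⟩ := h y
      refine ⟨c * a, ?_⟩
      have hsub : y • x - f (c * a) = x * (y - f c) + f c * (x - f a) := by
        rw [map_mul, smul_eq_mul]
        ring
      rw [hsub, pow_succ, Ideal.map_mul]
      rw [pow_succ, Ideal.map_mul] at ha
      exact add_mem (Ideal.mul_mem_mul hxn hc) (Ideal.mul_mem_left _ _ ha)

theorem exists_adicCompletion_lift {A B : Type*} [CommRing A] [CommRing B] {I : Ideal A}
    {J : Ideal B} [IsAdicComplete J B] (f : A →+* B) (hf : I.map f ≤ J) :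
    ∃ F : AdicCompletion I A →+* B, F.comp (algebraMap A (AdicCompletion I A)) = f := by
  have hpow (n : ℕ) : I ^ n ≤ (J ^ n).comap f := by
    rw [← Ideal.map_le_iff_le_comap, Ideal.map_pow]
    exact Ideal.pow_right_mono hf n
  let φ (n : ℕ) : AdicCompletion I A →+* B ⧸ J ^ n :=
    (Ideal.quotientMap (J ^ n) f (hpow n)).comp (AdicCompletion.evalₐ I n : _ →+* _)
  have hφ {m n : ℕ} (hmn : m ≤ n) : (Ideal.Quotient.factorPow J hmn).comp (φ n) = φ m := by
    ext x
    induction x using AdicCompletion.induction_on with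
    | _ x =>
      simp only [φ, RingHom.comp_apply, RingHom.coe_coe, AdicCompletion.evalₐ_mk,
        Ideal.quotientMap_mk]
      rw [Ideal.Quotient.factor_mk, Ideal.Quotient.eq, ← map_sub, ← Ideal.mem_comap]
      refine hpow m ?_
      have hx := AdicCompletion.AdicCauchySequence.mk_eq_mk (I := I) hmn x
      rw [Submodule.Quotient.eq] at hx
      rwa [smul_eq_mul, Ideal.mul_top] at hx
  refine ⟨IsAdicComplete.liftRingHom J φ hφ, RingHom.ext fun a ↦
    (IsHausdorff.eq_iff_smodEq (I := J)).2 fun n ↦ ?_⟩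
  rw [SModEq.sub_mem, smul_eq_mul, Ideal.mul_top, ← Ideal.Quotient.eq]
  refine (IsAdicComplete.mk_liftRingHom J φ hφ n _).trans ?_
  have heval : AdicCompletion.evalₐ I n (algebraMap A (AdicCompletion I A) a) =
    Ideal.Quotient.mk _ a := (AdicCompletion.evalₐ I n).commutes a
  simp only [φ, RingHom.comp_apply, RingHom.coe_coe, heval, Ideal.quotientMap_mk]

section Local

variable (A : Type*) [CommRing A] [IsLocalRing A] [IsNoetherianRing A]

theorem exists_sub_algebraMap_mem_map_maximalIdeal
    (c : AdicCompletion (maximalIdeal A) A) :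
    ∃ a, c - algebraMap A (AdicCompletion (maximalIdeal A) A) a ∈
      (maximalIdeal A).map (algebraMap A (AdicCompletion (maximalIdeal A) A)) := by
  obtain ⟨a, ha⟩ := Ideal.Quotient.mk_surjective (AdicCompletion.evalOneₐ (maximalIdeal A) c)
  refine ⟨a, ?_⟩
  rw [← AdicCompletion.ker_evalOneₐ_eq_map _ (IsNoetherian.noetherian _), RingHom.mem_ker,
    map_sub, sub_eq_zero]
  exact ha.symm.trans ((AdicCompletion.evalOneₐ (maximalIdeal A)).commutes a).symm

theorem isNoetherianRing_adicCompletion_maximalIdeal :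
    IsNoetherianRing (AdicCompletion (maximalIdeal A) A) := by
  have : IsAdicComplete ((maximalIdeal A).map
      (algebraMap A (AdicCompletion (maximalIdeal A) A))) (AdicCompletion (maximalIdeal A) A) := by
    rw [← AdicCompletion.maximalIdeal_eq_map]
    infer_instance
  exact isNoetherianRing_of_isAdicComplete_map _ (maximalIdeal A)
    (exists_sub_algebraMap_mem_map_maximalIdeal A)

end Local

theorem ker_algebraMap_eq_map_ker_of_faithfullyFlat {A B C D : Type*} [CommRing A] [CommRing B]
    [CommRing C] [CommRing D] [Algebra A B] [Algebra A C] [Algebra A D] [Algebra B D]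
    [Algebra C D] [IsScalarTower A B D] [IsScalarTower A C D] [Module.FaithfullyFlat B D]
    [IsLocalRing C] [IsNoetherianRing C] {I : Ideal A} (hI : I.map (algebraMap A C) ≠ ⊤)
    (hC : ∀ c, ∃ a, c - algebraMap A C a ∈ I.map (algebraMap A C))
    (hAB : Function.Surjective (algebraMap A B)) :
    RingHom.ker (algebraMap C D) = (RingHom.ker (algebraMap A B)).map (algebraMap A C) := by
  refine le_antisymm (fun c hc ↦ mem_of_forall_mem_sup_pow hI fun n ↦ ?_) ?_
  · obtain ⟨a, ha⟩ := exists_sub_mem_map_pow _ I hC n c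
    have haD : algebraMap B D (algebraMap A B a) ∈
        ((I ^ n).map (algebraMap A B)).map (algebraMap B D) := by
      have hca := Ideal.mem_map_of_mem (algebraMap C D) ha
      rwa [map_sub, (RingHom.mem_ker).1 hc, zero_sub, neg_mem_iff, Ideal.map_map,
        ← IsScalarTower.algebraMap_eq, ← IsScalarTower.algebraMap_apply,
        IsScalarTower.algebraMap_apply A B D, IsScalarTower.algebraMap_eq A B D,
        ← Ideal.map_map] at hca
    have haA : a ∈ I ^ n ⊔ RingHom.ker (algebraMap A B) := by
      rw [← comap_map_eq_sup_ker hAB]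
      rwa [← Ideal.mem_comap, Ideal.comap_map_eq_self_of_faithfullyFlat] at haD
    have haC := Ideal.mem_map_of_mem (algebraMap A C) haA
    rw [Ideal.map_sup, sup_comm, Ideal.map_pow] at haC
    rw [Ideal.map_pow] at ha
    simpa only [sub_add_cancel] using add_mem (Ideal.mem_sup_right ha) haC
  · rw [Ideal.map_le_iff_le_comap]
    intro a ha
    rw [Ideal.mem_comap, RingHom.mem_ker, ← IsScalarTower.algebraMap_apply,
      IsScalarTower.algebraMap_apply A B D, (RingHom.mem_ker).1 ha, map_zero]

end Completion

section KernelRegular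

theorem isWeaklyRegularHom_adicCompletion (P : Type u) [CommRing P] [IsLocalRing P]
    [IsNoetherianRing P] : IsWeaklyRegularHom P (AdicCompletion (maximalIdeal P) P)
      (algebraMap P (AdicCompletion (maximalIdeal P) P)) := by
  have := isNoetherianRing_adicCompletion_maximalIdeal P
  refine isWeaklyRegularHom_algebraMap_iff.2 ⟨inferInstance, inferInstance,
    isRegularLocal_quotient_iff.2 ⟨[], .nil _ _, ?_⟩⟩
  rw [Ideal.ofList_nil, sup_bot_eq, AdicCompletion.maximalIdeal_eq_map]

variable {R P S A D : Type u} [CommRing R] [CommRing P] [CommRing S] [CommRing A] [CommRing D]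
  [IsLocalRing R] [IsLocalRing P] [IsLocalRing S] [IsLocalRing A]
  [Algebra P S] [Algebra P A] [Algebra P D] [Algebra S D] [Algebra A D]
  [IsScalarTower P S D] [IsScalarTower P A D]

theorem exists_sub_algebraMap_mem_maximalIdeal [Nontrivial D]
    (hPS : Function.Surjective (algebraMap P S)) (hAD : Function.Surjective (algebraMap A D))
    (hPA : (maximalIdeal P).map (algebraMap P A) = maximalIdeal A)
    (hSD : ∀ d, ∃ s, d - algebraMap S D s ∈ (maximalIdeal S).map (algebraMap S D)) (a : A) :
    ∃ p, a - algebraMap P A p ∈ (maximalIdeal P).map (algebraMap P A) := by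
  obtain ⟨s, hs⟩ := hSD (algebraMap A D a)
  obtain ⟨p, rfl⟩ := hPS s
  refine ⟨p, ?_⟩
  rw [← Ideal.map_comap_of_surjective _ hPS (maximalIdeal S),
    comap_maximalIdeal_of_surjective hPS, Ideal.map_map, ← IsScalarTower.algebraMap_eq,
    ← IsScalarTower.algebraMap_apply, IsScalarTower.algebraMap_apply P A D,
    IsScalarTower.algebraMap_eq P A D, ← Ideal.map_map, ← map_sub, ← Ideal.mem_comap,
    comap_map_eq_sup_ker hAD, hPA] at hs
  rw [hPA]
  have hle : maximalIdeal A ⊔ RingHom.ker (algebraMap A D) ≤ maximalIdeal A :=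
    sup_le le_rfl (le_maximalIdeal (RingHom.ker_ne_top _))
  exact hle hs

variable [IsNoetherianRing R] [IsNoetherianRing P] [IsNoetherianRing A] [Algebra R P]
  [Algebra R A] [IsScalarTower R P A] [Module.FaithfullyFlat S D]
  [IsAdicComplete (maximalIdeal A) A]

theorem generatedByRegularSequence_ker_of_isWeaklyRegularHom
    (hP : IsWeaklyRegularHom R P (algebraMap R P)) (hA : IsWeaklyRegularHom R A (algebraMap R A))
    (hPS : Function.Surjective (algebraMap P S)) (hAD : Function.Surjective (algebraMap A D))
    (hker : GeneratedByRegularSequence A (RingHom.ker (algebraMap A D)))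
    (hPA : (maximalIdeal P).map (algebraMap P A) = maximalIdeal A)
    (hSD : ∀ d, ∃ s, d - algebraMap S D s ∈ (maximalIdeal S).map (algebraMap S D)) :
    GeneratedByRegularSequence P (RingHom.ker (algebraMap P S)) := by
  let C := AdicCompletion (maximalIdeal P) P
  have : IsNoetherianRing C := isNoetherianRing_adicCompletion_maximalIdeal P
  have hmC : (maximalIdeal P).map (algebraMap P C) = maximalIdeal C :=
    AdicCompletion.maximalIdeal_eq_map.symm
  obtain ⟨τ, hτ⟩ := exists_adicCompletion_lift (algebraMap P A) hPA.le
  let : Algebra C A := τ.toAlgebra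
  let : Algebra C D := ((algebraMap A D).comp τ).toAlgebra
  have : IsScalarTower P C A := .of_algebraMap_eq' hτ.symm
  have : IsScalarTower R C A := .of_algebraMap_eq fun r ↦ by
    rw [IsScalarTower.algebraMap_apply R P C, ← IsScalarTower.algebraMap_apply P C A,
      ← IsScalarTower.algebraMap_apply R P A]
  have : IsScalarTower P C D := .of_algebraMap_eq fun p ↦ by
    rw [IsScalarTower.algebraMap_apply P A D, IsScalarTower.algebraMap_apply P C A]
    rfl
  have : Nontrivial D := (FaithfulSMul.algebraMap_injective S D).nontrivial
  have hmCA : (maximalIdeal C).map τ = maximalIdeal A := by rw [← hmC, Ideal.map_map, hτ, hPA]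
  have hCA : Function.Surjective (algebraMap C A) := by
    have : IsHausdorff ((maximalIdeal C).map τ) A := by
      rw [hmCA]
      infer_instance
    refine surjective_of_forall_exists_sub_mem_map τ (maximalIdeal C) fun a ↦ ?_
    obtain ⟨p, hp⟩ := exists_sub_algebraMap_mem_maximalIdeal hPS hAD hPA hSD a
    exact ⟨algebraMap P C p, by rwa [hmCA, ← hPA, ← RingHom.comp_apply, hτ]⟩
  have hkerCA := ((hP.trans (isWeaklyRegularHom_adicCompletion P)).generatedByRegularSequence_ker
    hA hCA)
  have hkerCD : GeneratedByRegularSequence C (RingHom.ker (algebraMap C D)) :=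
    .comap_of_surjective (f := algebraMap C A) hCA hkerCA hker
  rw [ker_algebraMap_eq_map_ker_of_faithfullyFlat (A := P) (B := S) (I := maximalIdeal P)
    (hmC ▸ (maximalIdeal.isMaximal C).ne_top) (exists_sub_algebraMap_mem_map_maximalIdeal P) hPS]
    at hkerCD
  have : Module.FaithfullyFlat P C := .of_flat_of_isLocalHom
  exact hkerCD.of_map_of_faithfullyFlat (IsNoetherian.noetherian _)

end KernelRegular

section HomologicalDimension

open CategoryTheory

variable {Q : Type u} [CommRing Q]

theorem exact_characterModule_dual {A B C : Type*} [AddCommGroup A] [Module Q A] [AddCommGroup B]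
    [Module Q B] [AddCommGroup C] [Module Q C] {i : A →ₗ[Q] B} {f : B →ₗ[Q] C}
    (hex : Function.Exact i f) (hf : Function.Surjective f) :
    Function.Exact (CharacterModule.dual f) (CharacterModule.dual i) := by
  intro φ
  constructor
  · intro hφ
    have hker : f.toAddMonoidHom.ker ≤ φ.ker := fun b hb ↦ by
      obtain ⟨a, rfl⟩ := (hex b).1 hb
      exact DFunLike.congr_fun hφ a
    exact ⟨f.toAddMonoidHom.liftOfSurjective hf ⟨φ, hker⟩,
      AddMonoidHom.liftOfRightInverse_comp _ _ _ ⟨φ, hker⟩⟩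
  · rintro ⟨ψ, rfl⟩
    rw [← LinearMap.comp_apply, ← CharacterModule.dual_comp, hex.linearMap_comp_eq_zero,
      CharacterModule.dual_zero, LinearMap.zero_apply]

variable {A B C : Type u} [AddCommGroup A] [Module Q A] [AddCommGroup B] [Module Q B]
  [AddCommGroup C] [Module Q C]

theorem shortExact_characterModule_dual {i : A →ₗ[Q] B} {f : B →ₗ[Q] C}
    (hi : Function.Injective i) (hex : Function.Exact i f) (hf : Function.Surjective f) :
    (ModuleCat.shortComplexOfCompEqZero (CharacterModule.dual f) (CharacterModule.dual i)
      (exact_characterModule_dual hex hf).linearMap_comp_eq_zero).ShortExact :=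
  ModuleCat.shortComplex_shortExact _ (exact_characterModule_dual hex hf)
    (CharacterModule.dual_injective_of_surjective f hf)
    (CharacterModule.dual_surjective_of_injective i hi)

theorem flat_iff_injective_of_characterModule :
    Module.Flat Q A ↔ Injective (ModuleCat.of Q (CharacterModule A)) := by
  rw [Module.Flat.iff_characterModule_injective, Module.injective_iff_injective_object]

theorem flatDimLE_iff_hasInjectiveDimensionLT {n : ℕ} :
    FlatDimLE Q n A ↔ HasInjectiveDimensionLT (ModuleCat.of Q (CharacterModule A)) (n + 1) := by
  induction n generalizing A with
  | zero =>
    exact flat_iff_injective_of_characterModule.trans injective_iff_hasInjectiveDimensionLT_one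
  | succ n ih =>
    have step {F : Type u} [AddCommGroup F] [Module Q F] (hF : Module.Flat Q F) {f : F →ₗ[Q] A}
        (hf : Function.Surjective f) : FlatDimLE Q n (LinearMap.ker f) ↔
          HasInjectiveDimensionLT (ModuleCat.of Q (CharacterModule A)) (n + 2) :=
      ih.trans ((shortExact_characterModule_dual (LinearMap.ker f).injective_subtype
        (LinearMap.exact_subtype_ker_map f) hf).hasInjectiveDimensionLT_X₃_iff n
          (flat_iff_injective_of_characterModule.1 hF))
    constructor
    · rintro ⟨F, _, _, f, hF, hf, hker⟩
      exact (step hF hf).1 hker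
    · intro h
      have hq := Finsupp.linearCombination_id_surjective Q A
      exact ⟨A →₀ Q, _, _, _, inferInstance, hq, (step inferInstance hq).2 h⟩

theorem FlatDimLE.of_linearEquiv_s6 {n : ℕ} (h : FlatDimLE Q n A) (e : A ≃ₗ[Q] B) :
    FlatDimLE Q n B := by
  rw [flatDimLE_iff_hasInjectiveDimensionLT] at h ⊢
  exact hasInjectiveDimensionLT_of_iso (CharacterModule.congr e).toModuleIso (n + 1)

theorem FlatDimLE.mono {m n : ℕ} (h : FlatDimLE Q m A) (hmn : m ≤ n) : FlatDimLE Q n A := by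
  rw [flatDimLE_iff_hasInjectiveDimensionLT] at h ⊢
  exact hasInjectiveDimensionLT_of_ge _ (m + 1) (n + 1) (by lia)

theorem FlatDimLE.of_exact {n : ℕ} {i : A →ₗ[Q] B} {f : B →ₗ[Q] C}
    (hi : Function.Injective i) (hex : Function.Exact i f) (hf : Function.Surjective f)
    (hA : FlatDimLE Q n A) (hB : FlatDimLE Q (n + 1) B) : FlatDimLE Q (n + 1) C := by
  rw [flatDimLE_iff_hasInjectiveDimensionLT] at hA hB ⊢
  exact (shortExact_characterModule_dual hi hex hf).hasInjectiveDimensionLT_X₁ (n + 1) hA hB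

theorem FlatDimLE.baseChange {n : ℕ} (Q' : Type u) [CommRing Q'] [Algebra Q Q']
    [Module.Flat Q Q'] (h : FlatDimLE Q n A) : FlatDimLE Q' n (Q' ⊗[Q] A) := by
  induction n generalizing A with
  | zero =>
    have : Module.Flat Q A := h
    exact (inferInstance : Module.Flat Q' (Q' ⊗[Q] A))
  | succ n ih =>
    obtain ⟨F, _, _, f, hF, hf, hker⟩ := h
    have hF' : FlatDimLE Q' 0 (Q' ⊗[Q] F) := (inferInstance : Module.Flat Q' (Q' ⊗[Q] F))
    exact .of_exact
      (i := AlgebraTensorModule.lTensor Q' Q' (LinearMap.ker f).subtype)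
      (f := AlgebraTensorModule.lTensor Q' Q' f)
      (Module.Flat.lTensor_preserves_injective_linearMap _ (LinearMap.ker f).injective_subtype)
      (lTensor_exact Q' (LinearMap.exact_subtype_ker_map f) hf) (LinearMap.lTensor_surjective Q' hf)
      (ih hker) (hF'.mono (Nat.zero_le _))

theorem projDimLE_iff_hasProjectiveDimensionLE {n : ℕ} :
    ProjDimLE Q n A ↔ HasProjectiveDimensionLE (ModuleCat.of Q A) n := by
  induction n generalizing A with
  | zero =>
    exact (IsProjective.iff_projective A).trans projective_iff_hasProjectiveDimensionLT_one
  | succ n ih =>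
    have step {F : Type u} [AddCommGroup F] [Module Q F] (hF : Module.Projective Q F)
        {f : F →ₗ[Q] A} (hf : Function.Surjective f) : ProjDimLE Q n (LinearMap.ker f) ↔
          HasProjectiveDimensionLE (ModuleCat.of Q A) (n + 1) :=
      ih.trans ((LinearMap.shortExact_shortComplexKer hf).hasProjectiveDimensionLT_X₃_iff n
        ((IsProjective.iff_projective F).1 hF)).symm
    constructor
    · rintro ⟨F, _, _, f, hF, hf, hker⟩
      exact (step hF hf).1 hker
    · intro h
      have hq := Finsupp.linearCombination_id_surjective Q A
      exact ⟨A →₀ Q, _, _, _, inferInstance, hq, (step inferInstance hq).2 h⟩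

theorem GeneratedByRegularSequence.projDimFinite_s6 [IsLocalRing Q] [IsNoetherianRing Q]
    {R' : Type u} [CommRing R'] [Algebra Q R'] (hs : Function.Surjective (algebraMap Q R'))
    (h : GeneratedByRegularSequence Q (RingHom.ker (algebraMap Q R'))) : ProjDimFinite Q R' := by
  obtain ⟨rs, hrs, hspan⟩ := h
  refine ⟨rs.length, projDimLE_iff_hasProjectiveDimensionLE.2 ?_⟩
  have hdim := ModuleCat.projectiveDimension_quotient_eq_length.{u} rs hrs
  let V := ModuleCat.of Q (Shrink.{u} (Q ⧸ Ideal.ofList rs))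
  let e : V ≃ₗ[Q] ModuleCat.of Q R' :=
    Shrink.linearEquiv Q _ ≪≫ₗ Submodule.quotEquivOfEq _ _ hspan ≪≫ₗ
      (Ideal.quotientKerAlgEquivOfSurjective (f := Algebra.ofId Q R') hs).toLinearEquiv
  have : HasProjectiveDimensionLE V rs.length := by rw [← projectiveDimension_le_iff, hdim]
  exact ModuleCat.hasProjectiveDimensionLE_of_linearEquiv e rs.length

end HomologicalDimension

section PolynomialModules

open Polynomial

theorem coeff_polynomialTensorProduct_tmul {Q N : Type*} [CommRing Q]
    [AddCommGroup N] [Module Q N] (p : Q[X]) (n : N) (i : ℕ) :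
    (PolynomialModule.polynomialTensorProductLEquivPolynomialModule Q N (p ⊗ₜ n)).coeff i =
      p.coeff i • n := by
  have h : PolynomialModule.polynomialTensorProductLEquivPolynomialModule Q N (p ⊗ₜ n) =
      p • PolynomialModule.single Q 0 n := by
    rfl
  rw [h, PolynomialModule.smul_single_apply]
  simp

variable (Q N : Type*) [CommRing Q] [AddCommGroup N] [Module Q N] [Module Q[X] N]

/-- The endomorphism `p ⊗ n ↦ X p ⊗ n - p ⊗ X n` of `Q[X] ⊗ N`; its cokernel is `N` and the
resulting sequence is the characteristic sequence of the `Q[X]`-module `N`. -/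
noncomputable def characteristicMap [IsScalarTower Q Q[X] N] : Q[X] ⊗[Q] N →ₗ[Q[X]] Q[X] ⊗[Q] N :=
  (X : Q[X]) • LinearMap.id -
    AlgebraTensorModule.lTensor Q[X] Q[X] ((LinearMap.lsmul Q[X] N X).restrictScalars Q)

variable {Q N} [IsScalarTower Q Q[X] N]

theorem characteristicMap_tmul (p : Q[X]) (n : N) :
    characteristicMap Q N (p ⊗ₜ n) = (X * p) ⊗ₜ n - p ⊗ₜ ((X : Q[X]) • n) := by
  simp [characteristicMap, TensorProduct.smul_tmul']

theorem coeff_succ_characteristicMap (t : Q[X] ⊗[Q] N) (i : ℕ) :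
    (PolynomialModule.polynomialTensorProductLEquivPolynomialModule Q N
        (characteristicMap Q N t)).coeff (i + 1) =
      (PolynomialModule.polynomialTensorProductLEquivPolynomialModule Q N t).coeff i -
        (X : Q[X]) •
          (PolynomialModule.polynomialTensorProductLEquivPolynomialModule Q N t).coeff (i + 1) := by
  induction t with
  | zero => simp
  | tmul p n =>
    have hsub (a b : PolynomialModule Q N) : (a - b).coeff = a.coeff - b.coeff := rfl
    rw [characteristicMap_tmul, map_sub, hsub, Finsupp.sub_apply]
    simp only [coeff_polynomialTensorProduct_tmul, coeff_X_mul]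
    rw [smul_comm]
  | add a b ha hb =>
    simp only [map_add, PolynomialModule.coeff_add, Finsupp.add_apply, ha, hb, smul_add]
    abel

theorem characteristicMap_injective : Function.Injective (characteristicMap Q N) := by
  refine (injective_iff_map_eq_zero _).2 fun t ht ↦ ?_
  let e := PolynomialModule.polynomialTensorProductLEquivPolynomialModule Q N
  have hstep (i : ℕ) : (e t).coeff i = (X : Q[X]) • (e t).coeff (i + 1) := by
    have h := coeff_succ_characteristicMap t i
    rw [ht, map_zero, PolynomialModule.coeff_zero, Finsupp.zero_apply] at h
    exact sub_eq_zero.1 h.symm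
  have hpow (k i : ℕ) : (e t).coeff i = (X ^ k : Q[X]) • (e t).coeff (i + k) := by
    induction k with
    | zero => simp
    | succ k ih => rw [ih, hstep (i + k), smul_smul, ← pow_succ, add_assoc]
  refine e.injective (PolynomialModule.coeff_injective ?_)
  ext i
  obtain ⟨m, hm⟩ := (e t).coeff.support.exists_nat_subset_range
  have hzero : (e t).coeff (i + m) = 0 := Finsupp.notMem_support_iff.1 fun h ↦ by
    have := Finset.mem_range.1 (hm h)
    lia
  rw [hpow m i, hzero, smul_zero, map_zero, PolynomialModule.coeff_zero, Finsupp.zero_apply]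

theorem tmul_sub_one_tmul_smul_mem_range_characteristicMap (p : Q[X]) (n : N) :
    p ⊗ₜ[Q] n - 1 ⊗ₜ (p • n) ∈ LinearMap.range (characteristicMap Q N) := by
  induction p using Polynomial.induction_on' with
  | add p q hp hq =>
    rw [add_smul, add_tmul, tmul_add, add_sub_add_comm]
    exact add_mem hp hq
  | monomial k a =>
    induction k generalizing n with
    | zero =>
      rw [monomial_zero_left, ← algebraMap_eq, Algebra.algebraMap_eq_smul_one, smul_tmul,
        smul_assoc, one_smul, sub_self]
      exact zero_mem _
    | succ k ih =>
      have h := add_mem (LinearMap.mem_range_self (characteristicMap Q N) (monomial k a ⊗ₜ n))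
        (ih ((X : Q[X]) • n))
      rwa [characteristicMap_tmul, sub_add_sub_cancel, smul_smul, X_mul_monomial,
        monomial_mul_X] at h

theorem exact_characteristicMap : Function.Exact (characteristicMap Q N)
    (LinearMap.liftBaseChange Q[X] (LinearMap.id : N →ₗ[Q] N)) := by
  have hrange (t : Q[X] ⊗[Q] N) :
      t - 1 ⊗ₜ LinearMap.liftBaseChange Q[X] (LinearMap.id : N →ₗ[Q] N) t ∈
        LinearMap.range (characteristicMap Q N) := by
    induction t with
    | zero => simp
    | tmul p n => exact tmul_sub_one_tmul_smul_mem_range_characteristicMap p n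
    | add a b ha hb =>
      rw [map_add, tmul_add, add_sub_add_comm]
      exact add_mem ha hb
  refine fun t ↦ ⟨fun h ↦ by simpa [h] using hrange t, ?_⟩
  rintro ⟨t, rfl⟩
  induction t with
  | zero => simp
  | tmul p n => simp [characteristicMap_tmul, smul_smul, mul_comm]
  | add a b ha hb => rw [map_add, map_add, ha, hb, add_zero]

theorem FlatDimLE.polynomial {Q N : Type u} [CommRing Q] [AddCommGroup N] [Module Q N]
    [Module Q[X] N] [IsScalarTower Q Q[X] N] {n : ℕ} (h : FlatDimLE Q n N) :
    FlatDimLE Q[X] (n + 1) N :=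
  .of_exact characteristicMap_injective exact_characteristicMap
    (fun n ↦ ⟨1 ⊗ₜ n, by simp⟩) (h.baseChange Q[X]) ((h.baseChange Q[X]).mono n.le_succ)

end PolynomialModules

section FiniteCIDim

theorem hasFiniteCIDim_iff {R M : Type u} [CommRing R] [AddCommGroup M] [Module R M] :
    HasFiniteCIDim R M ↔
      ∃ (R' Q : Type u) (_ : CommRing R') (_ : CommRing Q) (_ : IsLocalRing R')
        (_ : IsLocalRing Q) (_ : Algebra R R') (_ : Algebra Q R'),
        IsNoetherianRing R' ∧ IsNoetherianRing Q ∧ IsLocalHom (algebraMap R R') ∧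
        Module.Flat R R' ∧ Function.Surjective (algebraMap Q R') ∧
        GeneratedByRegularSequence Q (RingHom.ker (algebraMap Q R')) ∧
        FlatDimFinite Q (R' ⊗[R] M) := by
  have hcompHom (R' Q : Type u) [CommRing R'] [CommRing Q] [Algebra R R'] [Algebra Q R'] :
      Module.compHom (R' ⊗[R] M) (algebraMap Q R') = TensorProduct.leftModule :=
    Module.ext' _ _ fun q x ↦ algebraMap_smul R' q x
  constructor
  · rintro ⟨R', Q, _, _, f, g, ⟨_, _, hR', hQ, hf, _, hflat, hg, hker⟩, hfd, -⟩
    let := f.toAlgebra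
    let := g.toAlgebra
    refine ⟨R', Q, _, _, ‹_›, ‹_›, _, _, hR', hQ, hf, hflat, hg, hker, ?_⟩
    rw [← hcompHom R' Q]
    exact hfd
  · rintro ⟨R', Q, _, _, _, _, _, _, hR', hQ, hf, hflat, hg, hker, hfd⟩
    rw [← hcompHom R' Q] at hfd
    have hpd := hker.projDimFinite_s6 hg
    obtain ⟨f, rfl⟩ : ∃ f : R →+* R', ‹Algebra R R'› = f.toAlgebra :=
      ⟨algebraMap R R', Algebra.algebra_ext _ _ fun _ ↦ rfl⟩
    obtain ⟨g, rfl⟩ : ∃ g : Q →+* R', ‹Algebra Q R'› = g.toAlgebra :=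
      ⟨algebraMap Q R', Algebra.algebra_ext _ _ fun _ ↦ rfl⟩
    exact ⟨R', Q, _, _, f, g, ⟨‹_›, ‹_›, hR', hQ, hf, .of_surjective g hg, hflat, hg, hker⟩,
      hfd, hpd⟩

attribute [local instance] Algebra.TensorProduct.rightAlgebra in
theorem ker_algebraMap_tensorProduct_of_surjective (A B C : Type*) [CommRing A] [CommRing B]
    [CommRing C] [Algebra A B] [Algebra A C] (h : Function.Surjective (algebraMap A B)) :
    RingHom.ker (algebraMap C (B ⊗[A] C)) =
      (RingHom.ker (algebraMap A B)).map (algebraMap A C) := by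
  have hlid : ((Algebra.TensorProduct.lid A C : A ⊗[A] C →+* C).comp
      (Algebra.TensorProduct.includeLeft : A →ₐ[A] A ⊗[A] C)) = algebraMap A C := by
    ext; simp [Algebra.smul_def]
  apply le_antisymm
  · intro x hx
    have hx' : (1 : A) ⊗ₜ[A] x ∈
        RingHom.ker (Algebra.TensorProduct.map (Algebra.ofId A B) (AlgHom.id A C)) := by
      rw [RingHom.mem_ker, Algebra.TensorProduct.map_tmul, map_one]
      exact hx
    rw [Algebra.TensorProduct.rTensor_ker _ h] at hx'
    have hmap := Ideal.mem_map_of_mem (Algebra.TensorProduct.lid A C : A ⊗[A] C →+* C) hx'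
    rw [AlgHom.coe_ideal_map, Ideal.map_map, hlid] at hmap
    have hofId : RingHom.ker (Algebra.ofId A B) = RingHom.ker (algebraMap A B) := rfl
    simpa [hofId] using hmap
  · refine Ideal.map_le_iff_le_comap.2 fun a ha ↦ ?_
    rw [Ideal.mem_comap, RingHom.mem_ker, ← IsScalarTower.algebraMap_apply A C (B ⊗[A] C),
      IsScalarTower.algebraMap_apply A B (B ⊗[A] C), (RingHom.mem_ker).1 ha, map_zero]

attribute [local instance] Algebra.TensorProduct.rightAlgebra in
theorem HasFiniteCIDim.of_generatedByRegularSequence_ker {P S M : Type u} [CommRing P]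
    [CommRing S] [Algebra P S] [AddCommGroup M] [Module P M] [Module S M] [IsScalarTower P S M]
    (hPS : Function.Surjective (algebraMap P S))
    (hker : GeneratedByRegularSequence P (RingHom.ker (algebraMap P S)))
    (h : HasFiniteCIDim P M) : HasFiniteCIDim S M := by
  obtain ⟨P', Q, _, _, _, _, _, _, _, _, _, _, hQ, hkerQ, n, hfd⟩ := hasFiniteCIDim_iff.1 h
  have : IsLocalRing P := (algebraMap P P').domain_isLocalRing
  let S' := S ⊗[P] P'
  have hsurj : Function.Surjective (algebraMap P' S') :=
    Algebra.TensorProduct.includeRight_surjective P' hPS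
  have hker' := ker_algebraMap_tensorProduct_of_surjective P S P' hPS
  have hne : (RingHom.ker (algebraMap P S)).map (algebraMap P P') ≠ ⊤ :=
    ne_top_of_le_ne_top (maximalIdeal.isMaximal P').ne_top
      ((Ideal.map_mono (le_maximalIdeal hker.ne_top)).trans
        (Ideal.map_le_iff_le_comap.2 (maximalIdeal_comap (algebraMap P P')).ge))
  have : Nontrivial S' := not_subsingleton_iff_nontrivial.1 fun _ ↦
    hne (hker' ▸ (Ideal.eq_top_iff_one _).2 (Subsingleton.elim _ _))
  have : IsLocalRing S' := .of_surjective' _ hsurj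
  have : IsLocalHom (algebraMap S S') := by
    have : IsLocalHom (algebraMap P' S') := .of_surjective _ hsurj
    have : IsLocalHom ((algebraMap S S').comp (algebraMap P S)) := by
      rw [← IsScalarTower.algebraMap_eq, IsScalarTower.algebraMap_eq P P' S']
      infer_instance
    constructor
    intro s hs
    obtain ⟨p, rfl⟩ := hPS s
    exact (isUnit_of_map_unit ((algebraMap S S').comp (algebraMap P S)) p hs).map _
  let : Algebra Q S' := ((algebraMap P' S').comp (algebraMap Q P')).toAlgebra
  have : IsScalarTower Q P' S' := .of_algebraMap_eq fun _ ↦ rfl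
  let e := (Algebra.IsPushout.cancelBaseChange P P' S S' M).restrictScalars Q
  refine hasFiniteCIDim_iff.2 ⟨S', Q, _, _, ‹_›, ‹_›, _, _,
    isNoetherianRing_of_surjective _ _ _ hsurj, ‹_›, ‹_›, inferInstance, hsurj.comp hQ, ?_, n,
    hfd.of_linearEquiv_s6 e.symm⟩
  change GeneratedByRegularSequence Q (RingHom.ker ((algebraMap P' S').comp (algebraMap Q P')))
  rw [← RingHom.comap_ker]
  exact .comap_of_surjective hQ hkerQ (hker' ▸ hker.map_of_flat_s6 hne)

end FiniteCIDim

section PolynomialLocalization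

open Polynomial

theorem FlatDimLE.tensorProduct_localization {A A' L L' B B' M : Type u} [CommRing A]
    [CommRing A'] [CommRing L] [CommRing L'] [CommRing B] [CommRing B'] [Algebra A A']
    [Algebra A L] [Algebra L L'] [Algebra A' L'] [Algebra A L'] [IsScalarTower A A' L']
    [IsScalarTower A L L'] [Algebra B A'] [Algebra B B'] [Algebra B' L'] [Algebra B L']
    [IsScalarTower B A' L'] [IsScalarTower B B' L'] (W : Submonoid A) [IsLocalization W L]
    [Algebra.IsPushout B B' A' L'] [Module.Flat B B'] [AddCommGroup M] [Module A M] [Module L M]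
    [IsScalarTower A L M] {n : ℕ} (h : FlatDimLE B n (A' ⊗[A] M)) :
    FlatDimLE B' n (L' ⊗[L] M) := by
  have := IsLocalization.tensorProduct_compatibleSMul W L L' M
  let e₁ : B' ⊗[B] (A' ⊗[A] M) ≃ₗ[B'] L' ⊗[A'] (A' ⊗[A] M) :=
    (Algebra.IsPushout.cancelBaseChange B B' A' L' (A' ⊗[A] M)).symm
  let e₂ : L' ⊗[A'] (A' ⊗[A] M) ≃ₗ[L'] L' ⊗[L] M :=
    AlgebraTensorModule.cancelBaseChange A A' L' L' M ≪≫ₗ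
      (equivOfCompatibleSMul A L L' L' M).symm
  exact (h.baseChange B').of_linearEquiv_s6 (e₁ ≪≫ₗ e₂.restrictScalars B')

theorem map_primeCompl_comap_of_surjective {A B : Type*} [CommRing A] [CommRing B] {f : A →+* B}
    (hf : Function.Surjective f) (q : Ideal B) [q.IsPrime] :
    (q.comap f).primeCompl.map f = q.primeCompl :=
  SetLike.coe_injective (Set.image_preimage_eq (q.primeCompl : Set B) hf)

attribute [local instance] Polynomial.algebra

theorem faithfullyFlat_polynomial (A B : Type*) [CommRing A] [CommRing B] [Algebra A B]
    [Module.FaithfullyFlat A B] : Module.FaithfullyFlat A[X] B[X] :=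
  .of_linearEquiv _ _ (Algebra.IsPushout.equiv A A[X] B B[X]).symm.toLinearEquiv

theorem FlatDimLE.tensorProduct_polynomial {R R' Q M : Type u} [CommRing R] [CommRing R']
    [CommRing Q] [Algebra R R'] [Algebra Q R'] [AddCommGroup M] [Module R M] [Module R[X] M]
    [IsScalarTower R R[X] M] {n : ℕ} (h : FlatDimLE Q n (R' ⊗[R] M)) :
    FlatDimLE Q[X] (n + 1) (R'[X] ⊗[R[X]] M) := by
  let e : R'[X] ⊗[R[X]] M ≃ₗ[R'] R' ⊗[R] M :=
    Algebra.IsPushout.cancelBaseChange R R' R[X] R'[X] M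
  exact (h.of_linearEquiv_s6 (e.restrictScalars Q).symm).polynomial

theorem GeneratedByRegularSequence.ker_localRingHom_polynomial {Q R' : Type u} [CommRing Q]
    [CommRing R'] [Algebra Q R']
    (hQ : Function.Surjective (algebraMap Q R'))
    (h : GeneratedByRegularSequence Q (RingHom.ker (algebraMap Q R'))) (r : Ideal R'[X])
    [r.IsPrime] :
    GeneratedByRegularSequence _
      (RingHom.ker (Localization.localRingHom (r.comap (mapRingHom (algebraMap Q R'))) r
        (mapRingHom (algebraMap Q R')) rfl)) := by
  let q := r.comap (mapRingHom (algebraMap Q R'))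
  have : Module.Flat Q[X] (Localization.AtPrime q) := IsLocalization.flat _ q.primeCompl
  have : Module.Flat Q (Localization.AtPrime q) := .trans Q Q[X] _
  have hker : RingHom.ker (Localization.localRingHom q r (mapRingHom (algebraMap Q R')) rfl) =
      (RingHom.ker (algebraMap Q R')).map (algebraMap Q (Localization.AtPrime q)) := by
    rw [IsScalarTower.algebraMap_eq Q Q[X] (Localization.AtPrime q), ← Ideal.map_map,
      Polynomial.algebraMap_eq, ← ker_mapRingHom]
    exact IsLocalization.ker_map (Localization.AtPrime r) _
      (map_primeCompl_comap_of_surjective (Polynomial.map_surjective _ hQ) r)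
  rw [hker]
  exact h.map_of_flat_s6 (hker ▸ RingHom.ker_ne_top _)

theorem HasFiniteCIDim.localization_polynomial {R M : Type u} [CommRing R] [AddCommGroup M]
    [Module R M] (p : Ideal R[X]) [p.IsPrime]
    [Module (Localization.AtPrime p) M] [IsScalarTower R (Localization.AtPrime p) M]
    (h : HasFiniteCIDim R M) : HasFiniteCIDim (Localization.AtPrime p) M := by
  obtain ⟨R', Q, _, _, _, _, _, _, _, _, _, _, hQ, hker, n, hfd⟩ := hasFiniteCIDim_iff.1 h
  have : IsLocalRing R := (algebraMap R R').domain_isLocalRing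
  have : Module.FaithfullyFlat R R' := .of_flat_of_isLocalHom
  have := faithfullyFlat_polynomial R R'
  obtain ⟨r, _, ⟨hpr⟩⟩ := p.exists_isPrime_liesOver_of_faithfullyFlat (B := R'[X])
  let φ : R[X] →+* R'[X] := mapRingHom (algebraMap R R')
  let ψ : Q[X] →+* R'[X] := mapRingHom (algebraMap Q R')
  have hψ : Function.Surjective ψ := Polynomial.map_surjective _ hQ
  let q := r.comap ψ
  let : Algebra (Localization.AtPrime p) (Localization.AtPrime r) :=
    (Localization.localRingHom p r φ hpr).toAlgebra
  let : Algebra (Localization.AtPrime q) (Localization.AtPrime r) :=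
    (Localization.localRingHom q r ψ rfl).toAlgebra
  have : IsScalarTower R[X] (Localization.AtPrime p) (Localization.AtPrime r) :=
    .of_algebraMap_eq fun x ↦ (Localization.localRingHom_to_map p r φ hpr x).symm
  have : IsScalarTower Q[X] (Localization.AtPrime q) (Localization.AtPrime r) :=
    .of_algebraMap_eq fun x ↦ (Localization.localRingHom_to_map q r ψ rfl x).symm
  let : Module R[X] M := Module.compHom _ (algebraMap R[X] (Localization.AtPrime p))
  have : IsScalarTower R[X] (Localization.AtPrime p) M := .of_algebraMap_smul fun _ _ ↦ rfl
  have : IsScalarTower R R[X] M := .to₁₂₄ R R[X] (Localization.AtPrime p) M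
  have : IsLocalization (Algebra.algebraMapSubmonoid R'[X] q.primeCompl)
      (Localization.AtPrime r) := by
    change IsLocalization (q.primeCompl.map ψ) _
    rw [map_primeCompl_comap_of_surjective hψ r]
    infer_instance
  have : Algebra.IsPushout Q[X] (Localization.AtPrime q) R'[X] (Localization.AtPrime r) :=
    (Algebra.isPushout_of_isLocalization q.primeCompl _ _ _).symm
  have hflat : φ.Flat := inferInstanceAs (Module.Flat R[X] R'[X])
  exact hasFiniteCIDim_iff.2 ⟨Localization.AtPrime r, Localization.AtPrime q, _, _,
    inferInstance, inferInstance, _, _, inferInstance, inferInstance,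
    Localization.isLocalHom_localRingHom p r φ hpr,
    hflat.localRingHom r p hpr, RingHom.surjective_localRingHom_of_surjective ψ hψ r,
    hker.ker_localRingHom_polynomial hQ r, n + 1,
    hfd.tensorProduct_polynomial.tensorProduct_localization p.primeCompl⟩

end PolynomialLocalization

section WeaklyRegularFactorization

open Polynomial RingTheory.Sequence

variable {P : Type u} [CommRing P] [IsLocalRing P]

theorem exists_isWeaklyRegular_quotient_map_C (p : Ideal P[X]) (hp : p.comap C = maximalIdeal P) :
    ∃ fs : List P[X], IsWeaklyRegular (P[X] ⧸ (maximalIdeal P).map C) fs ∧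
      (maximalIdeal P).map C ⊔ Ideal.ofList fs = p := by
  let ρ : P[X] →+* (ResidueField P)[X] := mapRingHom (residue P)
  have hρ : Function.Surjective ρ := Polynomial.map_surjective _ residue_surjective
  have hker : RingHom.ker ρ = (maximalIdeal P).map C := by rw [ker_mapRingHom, ker_residue]
  obtain ⟨f₀, hf₀⟩ := (IsPrincipalIdealRing.principal (p.map ρ)).principal
  obtain ⟨f, rfl⟩ := hρ f₀
  have hspan : (maximalIdeal P).map C ⊔ Ideal.span {f} = p := by
    have hle : RingHom.ker ρ ≤ p := hker ▸ Ideal.map_le_iff_le_comap.2 hp.ge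
    rw [← hker, sup_comm, ← comap_map_eq_sup_ker hρ, Ideal.map_span, Set.image_singleton,
      ← Ideal.submodule_span_eq, ← hf₀, comap_map_eq_sup_ker hρ, sup_eq_left.2 hle]
  by_cases hf : ρ f = 0
  · refine ⟨[], IsWeaklyRegular.nil _ _, ?_⟩
    rw [Ideal.ofList_nil, sup_bot_eq, ← hspan, eq_comm, sup_eq_left,
      Ideal.span_singleton_le_iff_mem, ← hker]
    exact hf
  · refine ⟨[f], isWeaklyRegular_quotient_singleton_iff.2 fun c hc ↦ ?_, ?_⟩
    · rw [← hker, RingHom.mem_ker, map_mul] at hc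
      rw [← hker]
      exact (mul_eq_zero.1 hc).resolve_left hf
    · rwa [Ideal.ofList_singleton]

theorem IsWeaklyRegularHom.refl (P : Type u) [CommRing P] [IsLocalRing P] [IsNoetherianRing P] :
    IsWeaklyRegularHom P P (algebraMap P P) := by
  refine isWeaklyRegularHom_algebraMap_iff.2 ⟨inferInstanceAs (IsLocalHom (RingHom.id P)),
    inferInstance, isRegularLocal_quotient_iff.2 ⟨[], IsWeaklyRegular.nil _ _, ?_⟩⟩
  rw [Ideal.ofList_nil, sup_bot_eq, Algebra.algebraMap_self, Ideal.map_id]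

theorem isWeaklyRegularHom_localization_polynomial [IsNoetherianRing P] (p : Ideal P[X])
    [p.IsPrime] (hp : p.comap C = maximalIdeal P) :
    IsWeaklyRegularHom P (Localization.AtPrime p) (algebraMap P (Localization.AtPrime p)) := by
  have : Module.Flat P[X] (Localization.AtPrime p) := IsLocalization.flat _ p.primeCompl
  obtain ⟨fs, hfs, hspan⟩ := exists_isWeaklyRegular_quotient_map_C p hp
  have hmap : ((maximalIdeal P).map C).map (algebraMap P[X] (Localization.AtPrime p)) =
      (maximalIdeal P).map (algebraMap P (Localization.AtPrime p)) := by
    rw [Ideal.map_map, ← Polynomial.algebraMap_eq, ← IsScalarTower.algebraMap_eq]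
  refine isWeaklyRegularHom_algebraMap_iff.2 ⟨?_, .trans P P[X] _, isRegularLocal_quotient_iff.2
    ⟨fs.map (algebraMap P[X] _), hmap ▸ isWeaklyRegular_quotient_map_of_flat hfs, ?_⟩⟩
  · refine ((local_hom_TFAE _).out 4 0).1 ?_
    rw [IsScalarTower.algebraMap_eq P P[X], ← Ideal.comap_comap]
    exact (congrArg (Ideal.comap C) Localization.AtPrime.under_maximalIdeal).trans hp
  · rw [← hmap, ← Ideal.map_ofList, ← Ideal.map_sup, hspan,
      Localization.AtPrime.map_eq_maximalIdeal]

variable [IsNoetherianRing P] {T M : Type u} [CommRing T] [IsLocalRing T] [Algebra P T]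
  [IsLocalHom (algebraMap P T)] [AddCommGroup M] [Module T M] [Module P M] [IsScalarTower P T M]

theorem HasFiniteCIDim.exists_isWeaklyRegularHom_mem_range (h : HasFiniteCIDim P M) (t : T) :
    ∃ (P' : Type u) (_ : CommRing P') (_ : IsLocalRing P') (_ : Algebra P P') (_ : Algebra P' T)
      (_ : Module P' M), IsNoetherianRing P' ∧ IsScalarTower P P' T ∧ IsScalarTower P' T M ∧
      IsLocalHom (algebraMap P' T) ∧ IsWeaklyRegularHom P P' (algebraMap P P') ∧
      t ∈ Set.range (algebraMap P' T) ∧ HasFiniteCIDim P' M := by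
  let p : Ideal P[X] := (maximalIdeal T).comap (aeval t : P[X] →ₐ[P] T).toRingHom
  have hp : p.comap C = maximalIdeal P := by
    rw [Ideal.comap_comap, show (aeval t).toRingHom.comp C = algebraMap P T from
      RingHom.ext (aeval_C t), maximalIdeal_comap]
  have hunit (y : p.primeCompl) : IsUnit (aeval t (y : P[X])) := notMem_maximalIdeal.1 y.2
  let τ : Localization.AtPrime p →ₐ[P] T := IsLocalization.liftAlgHom hunit
  let : Algebra (Localization.AtPrime p) T := τ.toAlgebra
  let : Module (Localization.AtPrime p) M := Module.compHom M τ.toRingHom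
  have : IsScalarTower P (Localization.AtPrime p) T := .of_algebraMap_eq' τ.comp_algebraMap.symm
  have : IsScalarTower (Localization.AtPrime p) T M := .of_algebraMap_smul fun _ _ ↦ rfl
  have : IsScalarTower P (Localization.AtPrime p) M := .to₁₂₄ P _ T M
  refine ⟨Localization.AtPrime p, _, inferInstance, _, _, _, inferInstance, ‹_›, ‹_›, ?_,
    isWeaklyRegularHom_localization_polynomial p hp, ⟨algebraMap P[X] _ X, ?_⟩,
    h.localization_polynomial p⟩
  · refine ((local_hom_TFAE _).out 2 0).1 ?_
    rw [← Localization.AtPrime.map_eq_maximalIdeal, Ideal.map_map, Ideal.map_le_iff_le_comap]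
    have hτ : τ.toRingHom.comp (algebraMap P[X] _) = (aeval t : P[X] →ₐ[P] T).toRingHom :=
      IsLocalization.lift_comp hunit
    exact (congrArg (Ideal.comap · (maximalIdeal T)) hτ).ge
  · exact (IsLocalization.lift_eq hunit X).trans (aeval_X t)

theorem HasFiniteCIDim.exists_isWeaklyRegularHom_subset_range (h : HasFiniteCIDim P M)
    {s : Set T} (hs : s.Finite) :
    ∃ (P' : Type u) (_ : CommRing P') (_ : IsLocalRing P') (_ : Algebra P P') (_ : Algebra P' T)
      (_ : Module P' M), IsNoetherianRing P' ∧ IsScalarTower P P' T ∧ IsScalarTower P' T M ∧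
      IsLocalHom (algebraMap P' T) ∧ IsWeaklyRegularHom P P' (algebraMap P P') ∧
      s ⊆ Set.range (algebraMap P' T) ∧ HasFiniteCIDim P' M := by
  induction s, hs using Set.Finite.induction_on with
  | empty =>
    exact ⟨P, _, ‹_›, _, _, _, ‹_›, inferInstance, ‹_›, ‹_›, .refl P, Set.empty_subset _, h⟩
  | @insert t s _ _ ih =>
    obtain ⟨P₁, _, _, _, _, _, _, _, _, _, hP₁, hs, h₁⟩ := ih
    obtain ⟨P₂, _, _, _, _, _, hP₂N, _, htower, hlocal, hP₂, ht, h₂⟩ :=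
      h₁.exists_isWeaklyRegularHom_mem_range t
    let : Algebra P P₂ := ((algebraMap P₁ P₂).comp (algebraMap P P₁)).toAlgebra
    have : IsScalarTower P P₁ P₂ := .of_algebraMap_eq fun _ ↦ rfl
    refine ⟨P₂, _, ‹_›, _, _, _, hP₂N, .to₁₃₄ P P₁ P₂ T, htower, hlocal, hP₁.trans hP₂,
      Set.insert_subset ht (hs.trans ?_), h₂⟩
    rintro _ ⟨x, rfl⟩
    exact ⟨algebraMap P₁ P₂ x, (IsScalarTower.algebraMap_apply P₁ P₂ T x).symm⟩

end WeaklyRegularFactorization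

section Ascent

theorem surjective_algebraMap_of_finset_subset_range {R P S : Type*} [CommRing R] [CommRing P]
    [CommRing S] [Algebra R P] [Algebra R S] [Algebra P S] [IsScalarTower R P S]
    [IsLocalHom (algebraMap P S)] [Algebra.EssFiniteType R S]
    (h : (Algebra.EssFiniteType.finset R S : Set S) ⊆ Set.range (algebraMap P S)) :
    Function.Surjective (algebraMap P S) := by
  have hadjoin : Algebra.adjoin R (Algebra.EssFiniteType.finset R S : Set S) ≤
      (IsScalarTower.toAlgHom R P S).range := Algebra.adjoin_le h
  intro s
  obtain ⟨_, ht, hu, hst⟩ := (Algebra.essFiniteType_cond_iff R S _).1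
    (Algebra.EssFiniteType.isLocalization R S) s
  obtain ⟨x, rfl⟩ := hadjoin ht
  obtain ⟨y, hy⟩ := hadjoin hst
  obtain ⟨x, rfl⟩ : IsUnit x := isUnit_of_map_unit (algebraMap P S) x hu
  exact ⟨y * ↑x⁻¹, hu.mul_right_cancel <| by
    rw [← hy]
    exact (map_mul (algebraMap P S) _ _).symm.trans (congrArg _ (x.inv_mul_cancel_right y))⟩

theorem map_maximalIdeal_eq_of_subset_range {P S A D : Type*} [CommRing P] [CommRing S]
    [CommRing A] [CommRing D] [IsLocalRing P] [IsLocalRing S] [IsLocalRing A] [IsLocalRing D]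
    [Algebra P S] [Algebra P A] [Algebra P D] [Algebra S D] [Algebra A D] [IsScalarTower P S D]
    [IsScalarTower P A D] [IsLocalHom (algebraMap P A)]
    (hPS : Function.Surjective (algebraMap P S)) (hAD : Function.Surjective (algebraMap A D))
    (hSD : (maximalIdeal S).map (algebraMap S D) = maximalIdeal D) {s : Set A}
    (hs : Ideal.span s = RingHom.ker (algebraMap A D)) (hsP : s ⊆ Set.range (algebraMap P A)) :
    (maximalIdeal P).map (algebraMap P A) = maximalIdeal A := by
  have hD : ((maximalIdeal P).map (algebraMap P A)).map (algebraMap A D) = maximalIdeal D := by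
    rw [Ideal.map_map, ← IsScalarTower.algebraMap_eq, IsScalarTower.algebraMap_eq P S,
      ← Ideal.map_map, ← comap_maximalIdeal_of_surjective hPS,
      Ideal.map_comap_of_surjective _ hPS, hSD]
  have hker : RingHom.ker (algebraMap A D) ≤ (maximalIdeal P).map (algebraMap P A) := by
    rw [← hs, Ideal.span_le]
    intro a ha
    obtain ⟨p, rfl⟩ := hsP ha
    have hp : algebraMap P A p ∈ maximalIdeal A :=
      le_maximalIdeal (RingHom.ker_ne_top (algebraMap A D)) (hs ▸ Ideal.subset_span ha)
    exact Ideal.mem_map_of_mem _ ((maximalIdeal_comap (algebraMap P A)).le hp)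
  rw [← sup_eq_left.2 hker, ← comap_map_eq_sup_ker hAD, hD, comap_maximalIdeal_of_surjective hAD]

theorem subset_range_algebraMap_of_image_invFun_subset {P T B : Type*} [CommRing P] [CommRing T]
    [CommRing B] [Algebra P T] [Algebra T B] [Algebra P B] [IsScalarTower P T B] {s : Set B}
    (hT : s ⊆ Set.range (algebraMap T B))
    (hP : Function.invFun (algebraMap T B) '' s ⊆ Set.range (algebraMap P T)) :
    s ⊆ Set.range (algebraMap P B) := by
  intro b hb
  obtain ⟨p, hp⟩ := hP (Set.mem_image_of_mem _ hb)
  exact ⟨p, by rw [IsScalarTower.algebraMap_apply P T B, hp, Function.invFun_eq (hT hb)]⟩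

variable {R S A D M : Type u} [CommRing R] [CommRing S] [CommRing A] [CommRing D]
  [IsLocalRing R] [IsLocalRing S] [IsLocalRing A] [IsLocalRing D] [IsNoetherianRing R]
  [IsNoetherianRing A] [IsAdicComplete (maximalIdeal A) A]
  [Algebra R S] [Algebra R A] [Algebra S D] [Algebra A D] [Module.FaithfullyFlat S D]
  [Algebra.EssFiniteType R S]
  [AddCommGroup M] [Module R M] [Module S M] [IsScalarTower R S M]

theorem HasFiniteCIDim.of_ker_subset_range_algebraMap {T : Type u} [CommRing T] [IsLocalRing T]
    [Algebra R T] [Algebra T S] [Algebra T A] [Algebra T D] [IsScalarTower R T S]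
    [IsScalarTower R T A] [IsScalarTower T S D] [IsScalarTower T A D] [IsLocalHom (algebraMap R T)]
    [IsLocalHom (algebraMap T S)] [IsLocalHom (algebraMap T A)]
    (hTS : Function.Surjective (algebraMap T S))
    (hTA : (RingHom.ker (algebraMap A D) : Set A) ⊆ Set.range (algebraMap T A))
    (hA : IsWeaklyRegularHom R A (algebraMap R A)) (hAD : Function.Surjective (algebraMap A D))
    (hker : GeneratedByRegularSequence A (RingHom.ker (algebraMap A D)))
    (hmSD : (maximalIdeal S).map (algebraMap S D) = maximalIdeal D)
    (hSD : ∀ d, ∃ s, d - algebraMap S D s ∈ (maximalIdeal S).map (algebraMap S D))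
    (h : HasFiniteCIDim R M) : HasFiniteCIDim S M := by
  obtain ⟨gens, hgens⟩ := IsNoetherian.noetherian (RingHom.ker (algebraMap A D))
  let : Module T M := Module.compHom M (algebraMap T S)
  have : IsScalarTower T S M := .of_algebraMap_smul fun _ _ ↦ rfl
  have : IsScalarTower R T M := .to₁₂₄ R T S M
  obtain ⟨P, _, _, _, _, _, _, _, _, _, hP, hrange, hPM⟩ :=
    h.exists_isWeaklyRegularHom_subset_range (T := T)
      (((Algebra.EssFiniteType.finset R S).finite_toSet.image
        (Function.invFun (algebraMap T S))).union
      (gens.finite_toSet.image (Function.invFun (algebraMap T A))))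
  obtain ⟨hrangeS, hrangeA⟩ := Set.union_subset_iff.1 hrange
  let : Algebra P S := ((algebraMap T S).comp (algebraMap P T)).toAlgebra
  let : Algebra P A := ((algebraMap T A).comp (algebraMap P T)).toAlgebra
  let : Algebra P D := ((algebraMap T D).comp (algebraMap P T)).toAlgebra
  have : IsScalarTower P T S := .of_algebraMap_eq fun _ ↦ rfl
  have : IsScalarTower P T A := .of_algebraMap_eq fun _ ↦ rfl
  have : IsScalarTower P T D := .of_algebraMap_eq fun _ ↦ rfl
  have : IsScalarTower P S D := .to₁₃₄ P T S D
  have : IsScalarTower P A D := .to₁₃₄ P T A D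
  have : IsScalarTower R P S := .to₁₂₄ R P T S
  have : IsScalarTower R P A := .to₁₂₄ R P T A
  have : IsScalarTower P S M := .to₁₃₄ P T S M
  have : IsLocalHom (algebraMap P S) := RingHom.isLocalHom_comp (algebraMap T S) (algebraMap P T)
  have : IsLocalHom (algebraMap P A) := RingHom.isLocalHom_comp (algebraMap T A) (algebraMap P T)
  have hPS : Function.Surjective (algebraMap P S) :=
    surjective_algebraMap_of_finset_subset_range (R := R)
      (subset_range_algebraMap_of_image_invFun_subset (fun s _ ↦ hTS s) hrangeS)
  have hPA := map_maximalIdeal_eq_of_subset_range hPS hAD hmSD hgens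
    (subset_range_algebraMap_of_image_invFun_subset
      ((Ideal.subset_span.trans hgens.le).trans hTA) hrangeA)
  exact .of_generatedByRegularSequence_ker hPS
    (generatedByRegularSequence_ker_of_isWeaklyRegularHom hP hA hPS hAD hker hPA hSD) hPM

theorem HasFiniteCIDim.of_isAdicComplete_of_generatedByRegularSequence_ker [Algebra R D]
    [IsScalarTower R S D] [IsScalarTower R A D] [IsLocalHom (algebraMap R S)]
    (hA : IsWeaklyRegularHom R A (algebraMap R A)) (hAD : Function.Surjective (algebraMap A D))
    (hker : GeneratedByRegularSequence A (RingHom.ker (algebraMap A D)))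
    (hmSD : (maximalIdeal S).map (algebraMap S D) = maximalIdeal D)
    (hSD : ∀ d, ∃ s, d - algebraMap S D s ∈ (maximalIdeal S).map (algebraMap S D))
    (h : HasFiniteCIDim R M) : HasFiniteCIDim S M := by
  let a := IsScalarTower.toAlgHom R S D
  let g := IsScalarTower.toAlgHom R A D
  have : IsLocalHom (a : S →+* D) := inferInstanceAs (IsLocalHom (algebraMap S D))
  have : IsLocalHom (g : A →+* D) := hAD.isLocalHom
  let T := AlgHom.pullback a g
  have : IsLocalRing T := RingHom.isLocalRing_pullback (a : S →+* D) (g : A →+* D)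
  let : Algebra T S := (a.pullbackFst g).toAlgebra
  let : Algebra T A := (a.pullbackSnd g).toAlgebra
  let : Algebra T D := ((algebraMap S D).comp (algebraMap T S)).toAlgebra
  have : IsScalarTower R T S := .of_algebraMap_eq fun _ ↦ rfl
  have : IsScalarTower R T A := .of_algebraMap_eq fun _ ↦ rfl
  have : IsScalarTower T S D := .of_algebraMap_eq fun _ ↦ rfl
  have : IsScalarTower T A D := .of_algebraMap_eq fun t ↦ t.2
  have : IsLocalHom (algebraMap T S) := RingHom.isLocalHom_pullbackFst (a : S →+* D) (g : A →+* D)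
  have : IsLocalHom (algebraMap T A) := RingHom.isLocalHom_pullbackSnd (a : S →+* D) (g : A →+* D)
  have : IsLocalHom (algebraMap R T) := by
    have : IsLocalHom ((algebraMap T S).comp (algebraMap R T)) := ‹IsLocalHom (algebraMap R S)›
    exact isLocalHom_of_comp _ (algebraMap T S)
  exact h.of_ker_subset_range_algebraMap (T := T)
    (AlgHom.surjective_pullbackFst_of_surjective a g hAD)
    (fun x hx ↦ ⟨⟨(0, x), (map_zero a).trans hx.symm⟩, rfl⟩) hA hAD hker hmSD hSD

end Ascent

theorem ascent_CIfd_of_eft_ci_general (R S M : Type u) [CommRing R] [CommRing S]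
    [IsLocalRing R] [IsLocalRing S] [IsNoetherianRing R] [IsNoetherianRing S] [Algebra R S]
    [Algebra.EssFiniteType R S] [AddCommGroup M] [Module R M] [Module S M] [IsScalarTower R S M]
    (hci : IsCIAt R S (algebraMap R S) (maximalIdeal S)) (hfd : HasFiniteCIDim R M) :
    HasFiniteCIDim S M := by
  obtain ⟨A, _, f, g, ⟨hgf, _, ⟨_, _⟩, hf, hg, hlg⟩, hker⟩ := hci
  let D := AdicCompletion (maximalIdeal S) S
  let : Algebra R A := f.toAlgebra
  let : Algebra A D := g.toAlgebra
  have : IsScalarTower R A D := .of_algebraMap_eq' hgf.symm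
  have : Module.FaithfullyFlat S D := .of_flat_of_isLocalHom
  have : IsLocalHom (algebraMap R S) := by
    have := hf.1
    have : IsLocalHom ((algebraMap S D).comp (algebraMap R S)) := hgf ▸ RingHom.isLocalHom_comp g f
    exact isLocalHom_of_comp _ (algebraMap S D)
  exact hfd.of_isAdicComplete_of_generatedByRegularSequence_ker (A := A) (D := D) hf hg hker
    AdicCompletion.maximalIdeal_eq_map.symm (exists_sub_algebraMap_mem_map_maximalIdeal S)

/-- Ascent of complete intersection flat dimension. -/
theorem ascent_CIfd_of_eft_ci [Algebra.EssFiniteType R S]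
    (hci : IsCIAt R S (algebraMap R S) (maximalIdeal S))
    
    (hfd : HasFiniteCIDim R M) :
    HasFiniteCIDim S M := by
  exact ascent_CIfd_of_eft_ci_general R S M hci hfd
end
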